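/- arXiv:1402.3496 — 10 statements merged into one kernel-verified Lean document; each statement's English description precedes it below -/
import Mathlib

section
/- Let p ∈ ℝ^n and p' ∈ ℝ^{n'} be probability vectors, let g ∈ ℝ^n and g' ∈ ℝ^{n'} be strictly positive probability vectors, and let G ∈ ℝ^{n'×n} be a matrix with nonnegative entries whose columns each sum to 1 and which satisfies G p = p' and G g = g'. Then for every convex function f : ℝ → ℝ, one has Σ_j g'_j · f(p'_j / g'_j) ≤ Σ_i g_i · f(p_i / g_i). -/
/-!
Put `φ i = g i * f (p i / g i)`. The map `(a, b) ↦ b * f (a / b)` is the perspective of `f`, so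
Jensen's inequality in row `j` of `G` bounds the `j`-th term of the divergence of `(G p, G g)` by
`(G φ) j`. The columns of `G` sum to one, so `G φ` has the same total as `φ`.
-/

section

open Matrix

variable {𝕜 ι κ : Type*} [Fintype ι] [Fintype κ]

/-- The unnormalised discrete `f`-divergence `φ_f(p, g)`, which is the usual `f`-divergence
`D_f(p ‖ g)` when `p` and `g` are probability vectors. A term with `g i = 0` counts as `0`,
whatever `p i` is. -/
def fDivergence [Semifield 𝕜] (f : 𝕜 → 𝕜) (p g : ι → 𝕜) : 𝕜 :=
  ∑ i, g i * f (p i / g i)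

theorem sum_mulVec_of_sum_col_eq_one [NonAssocSemiring 𝕜] {G : Matrix κ ι 𝕜}
    (hGcol : ∀ i, ∑ j, G j i = 1) (v : ι → 𝕜) : ∑ j, (G *ᵥ v) j = ∑ i, v i := by
  simp only [mulVec, dotProduct]
  rw [Finset.sum_comm]
  simp only [← Finset.sum_mul, hGcol, one_mul]

variable [Field 𝕜] [LinearOrder 𝕜] [IsStrictOrderedRing 𝕜] {s : Set 𝕜} {f : 𝕜 → 𝕜} {p g : ι → 𝕜}

theorem dotProduct_mul_map_div_le_dotProduct (hf : ConvexOn 𝕜 s f) (hg : ∀ i, 0 < g i)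
    (hpg : ∀ i, p i / g i ∈ s) {w : ι → 𝕜} (hw : ∀ i, 0 ≤ w i) (hwg : 0 < w ⬝ᵥ g) :
    (w ⬝ᵥ g) * f ((w ⬝ᵥ p) / (w ⬝ᵥ g)) ≤ w ⬝ᵥ fun i ↦ g i * f (p i / g i) := by
  have mul_div_eq (i : ι) : g i * (p i / g i) = p i := mul_div_cancel₀ _ (hg i).ne'
  have jensen := hf.map_centerMass_le (t := Finset.univ) (w := fun i ↦ w i * g i)
    (fun i _ ↦ mul_nonneg (hw i) (hg i).le) hwg fun i _ ↦ hpg i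
  simp only [Finset.centerMass, smul_eq_mul, Function.comp_apply, inv_mul_eq_div, mul_assoc,
    mul_div_eq] at jensen
  exact (le_div_iff₀' hwg).mp jensen

theorem fDivergence_monotone_under_gibbsStochastic_general (hf : ConvexOn 𝕜 s f)
    (hg : ∀ i, 0 < g i) (hpg : ∀ i, p i / g i ∈ s) {G : Matrix κ ι 𝕜} (hG : ∀ j i, 0 ≤ G j i)
    (hGcol : ∀ i, ∑ j, G j i = 1) (hGg : ∀ j, 0 < (G *ᵥ g) j) :
    fDivergence f (G *ᵥ p) (G *ᵥ g) ≤ fDivergence f p g :=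
  calc
    fDivergence f (G *ᵥ p) (G *ᵥ g) ≤ ∑ j, (G *ᵥ fun i ↦ g i * f (p i / g i)) j :=
      Finset.sum_le_sum fun j _ ↦ dotProduct_mul_map_div_le_dotProduct hf hg hpg (hG j) (hGg j)
    _ = fDivergence f p g := sum_mulVec_of_sum_col_eq_one hGcol _

end

/-- Monotonicity of f-divergences under Gibbs-stochastic matrices. -/
theorem fDivergence_monotone_under_gibbsStochastic
    {n n' : ℕ} (p g : Fin n → ℝ) (p' g' : Fin n' → ℝ)
    (hp : ∀ i, 0 ≤ p i) (hps : ∑ i, p i = 1)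
    (hp' : ∀ j, 0 ≤ p' j) (hps' : ∑ j, p' j = 1)
    (hg : ∀ i, 0 < g i) (hgs : ∑ i, g i = 1)
    (hg' : ∀ j, 0 < g' j) (hgs' : ∑ j, g' j = 1)
    (G : Matrix (Fin n') (Fin n) ℝ)
    (hG : ∀ j i, 0 ≤ G j i)
    (hGcol : ∀ i, ∑ j, G j i = 1)
    (hGp : G.mulVec p = p') (hGg : G.mulVec g = g')
    (f : ℝ → ℝ) (hf : ConvexOn ℝ Set.univ f) :
    ∑ j, g' j * f (p' j / g' j) ≤ ∑ i, g i * f (p i / g i) := by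
  subst hGp hGg
  exact fDivergence_monotone_under_gibbsStochastic_general hf hg (fun _ ↦ Set.mem_univ _) hG
    hGcol hg'
end

section
/- Let p ∈ ℝ^n and p' ∈ ℝ^{n'} be probability vectors and let g ∈ ℝ^n and g' ∈ ℝ^{n'} be strictly positive probability vectors. If for every real number t one has Σ_j g'_j · max(p'_j/g'_j − t, 0) ≤ Σ_i g_i · max(p_i/g_i − t, 0), then there exists a matrix G ∈ ℝ^{n'×n} with nonnegative entries whose columns each sum to 1 and which satisfies G p = p' and G g = g'. -/
/-!
Over all transition matrices `H`, the tuples `j ↦ ∑ i, H i j • (p i, g i)` form a compact convex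
set. If `(p', g')` were outside, a separating functional would consist of one linear functional
`ℓ j` on the plane for each `j`, and sending every `i` to the best `j` gives
`∑ i, max_j ℓ j (p i, g i) < ∑ j, ℓ j (p' j, g' j)`. Since `g i > 0`, the maximum is
`g i * φ (p i / g i)` for the convex function `φ r = max_j ℓ j (r, 1)`, and on the finitely many
ratios involved `φ` is an affine function plus a nonnegative combination of hinge functions
`r ↦ max (r - t) 0`, so that the hypothesis rules the strict inequality out.
-/

section Hinge

theorem sum_mul_affine_add_hinge_sum {R ι : Type*} [CommRing R] [LinearOrder R] [Fintype ι]
    (w x : ι → R) (S : Finset R) (a b : R) (d : R → R) :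
    ∑ i, w i * (a + b * x i + ∑ t ∈ S, d t * max (x i - t) 0) =
      a * ∑ i, w i + b * ∑ i, w i * x i + ∑ t ∈ S, d t * ∑ i, w i * max (x i - t) 0 := by
  simp only [mul_add, Finset.sum_add_distrib, Finset.mul_sum, mul_comm (w _) a,
    mul_left_comm (w _)]
  rw [Finset.sum_comm]

theorem sum_insert_update_mul {α R : Type*} [DecidableEq α] [NonUnitalNonAssocSemiring R]
    {S : Finset α} {m : α} (hm : m ∉ S) (d φ : α → R) (e : R) :
    ∑ t ∈ insert m S, Function.update d m e t * φ t = e * φ m + ∑ t ∈ S, d t * φ t := by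
  rw [Finset.sum_insert hm, Function.update_self]
  congr 1
  refine Finset.sum_congr rfl fun t ht => ?_
  rw [Function.update_of_ne (ne_of_mem_of_not_mem ht hm)]

variable {𝕜 : Type*} [Field 𝕜] [LinearOrder 𝕜] [IsStrictOrderedRing 𝕜] {s : Set 𝕜} {f : 𝕜 → 𝕜}

theorem exists_hinge_sum_eq_on_insert_of_convexOn (hf : ConvexOn 𝕜 s f) {S : Finset 𝕜}
    (hSs : ↑S ⊆ s) {m b : 𝕜} (hms : m ∈ s) (hmS : ∀ x ∈ S, m < x)
    (hb : ∀ x ∈ S, f m + b * (x - m) ≤ f x) :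
    ∃ d : 𝕜 → 𝕜, (∀ t, 0 ≤ d t) ∧ ∀ x ∈ insert m S,
      f x = f m + b * (x - m) + ∑ t ∈ insert m S, d t * max (x - t) 0 := by
  induction S using Finset.induction_on_min generalizing m b with
  | empty => exact ⟨0, fun _ => le_rfl, by simp⟩
  | insert q S hqS ih =>
    have hqs : q ∈ s := hSs (by simp)
    have hmq : m < q := hmS q (by simp)
    -- The slope between the two leftmost points supports `f` to the right of `q`; passing from
    -- `b` to it costs one hinge at `m`.
    set c := (f q - f m) / (q - m)
    have hcq : f q - f m = c * (q - m) := (div_mul_cancel₀ _ (sub_pos.2 hmq).ne').symm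
    have hbc : b ≤ c := by
      rw [le_div_iff₀ (sub_pos.2 hmq)]
      linarith [hb q (by simp)]
    have hc : ∀ x ∈ S, f q + c * (x - q) ≤ f x := fun x hx => by
      have hslope : c ≤ (f x - f q) / (x - q) :=
        hf.slope_mono_adjacent hms (hSs (by simp [hx])) hmq (hqS x hx)
      rw [le_div_iff₀ (sub_pos.2 (hqS x hx))] at hslope
      linarith
    obtain ⟨d, hd, hfd⟩ := ih (fun x hx => hSs (Finset.mem_insert_of_mem hx)) hqs hqS hc
    have hm : m ∉ insert q S := fun h => (hmS m h).false
    refine ⟨Function.update d m (c - b),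
      le_update_iff.2 ⟨sub_nonneg.2 hbc, fun t _ => hd t⟩, fun x hx => ?_⟩
    rw [sum_insert_update_mul hm]
    rcases Finset.mem_insert.1 hx with rfl | hx
    · have hzero : ∑ t ∈ insert q S, d t * max (x - t) 0 = 0 :=
        Finset.sum_eq_zero fun t ht => by
          rw [max_eq_right (sub_nonpos.2 (hmS t ht).le), mul_zero]
      simp only [hzero, sub_self, max_self, mul_zero, add_zero]
    · rw [max_eq_left (sub_nonneg.2 (hmS x hx).le)]
      linear_combination hfd x hx + hcq

theorem exists_affine_add_hinge_sum_eq_of_convexOn (hf : ConvexOn 𝕜 s f) {S : Finset 𝕜}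
    (hSs : ↑S ⊆ s) :
    ∃ (a b : 𝕜) (d : 𝕜 → 𝕜), (∀ t, 0 ≤ d t) ∧
      ∀ x ∈ S, f x = a + b * x + ∑ t ∈ S, d t * max (x - t) 0 := by
  induction S using Finset.induction_on_min with
  | empty => exact ⟨0, 0, 0, fun _ => le_rfl, by simp⟩
  | insert m S hmS =>
    obtain ⟨b, hb⟩ := (S.image fun x => (f x - f m) / (x - m)).bddBelow
    have hsupport : ∀ x ∈ S, f m + b * (x - m) ≤ f x := fun x hx => by
      have hslope : b ≤ (f x - f m) / (x - m) :=
        hb (Finset.mem_coe.2 (Finset.mem_image_of_mem _ hx))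
      rw [le_div_iff₀ (sub_pos.2 (hmS x hx))] at hslope
      linarith
    obtain ⟨d, hd, hfd⟩ := exists_hinge_sum_eq_on_insert_of_convexOn hf
      (fun x hx => hSs (Finset.mem_insert_of_mem hx)) (hSs (by simp)) hmS hsupport
    exact ⟨f m - b * m, b, d, hd, fun x hx => by rw [hfd x hx]; ring⟩

theorem sum_mul_convexOn_le_of_sum_mul_hinge_le {ι κ : Type*} [Fintype ι] [Fintype κ]
    {w x : ι → 𝕜} {v y : κ → 𝕜} (hmass : ∑ j, v j = ∑ i, w i)
    (hmean : ∑ j, v j * y j = ∑ i, w i * x i)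
    (hhinge : ∀ t, ∑ j, v j * max (y j - t) 0 ≤ ∑ i, w i * max (x i - t) 0)
    (hf : ConvexOn 𝕜 s f) (hx : ∀ i, x i ∈ s) (hy : ∀ j, y j ∈ s) :
    ∑ j, v j * f (y j) ≤ ∑ i, w i * f (x i) := by
  set S := Finset.univ.image x ∪ Finset.univ.image y
  have hSs : ↑S ⊆ s := by
    simpa [S, Set.range_subset_iff] using And.intro hx hy
  obtain ⟨a, b, d, hd, hfd⟩ := exists_affine_add_hinge_sum_eq_of_convexOn hf hSs
  have hfx : ∀ i, f (x i) = a + b * x i + ∑ t ∈ S, d t * max (x i - t) 0 :=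
    fun i => hfd _ (by simp [S])
  have hfy : ∀ j, f (y j) = a + b * y j + ∑ t ∈ S, d t * max (y j - t) 0 :=
    fun j => hfd _ (by simp [S])
  simp only [hfx, hfy, sum_mul_affine_add_hinge_sum, hmass, hmean]
  gcongr with t
  · exact hd t
  · exact hhinge t

end Hinge

section Transition

variable {ι κ E : Type*} [Fintype ι] [AddCommGroup E] [Module ℝ E]
  [TopologicalSpace E] [IsTopologicalAddGroup E] [ContinuousSMul ℝ E]

/-- The map sending a transition matrix `H`, with `H i` the distribution of the target of `i`, to
the family of vectors obtained by transporting the family `a` along `H`. It is defined on all of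
`ι → κ → ℝ` so as to be linear. -/
noncomputable def transport (a : ι → E) : (ι → κ → ℝ) →L[ℝ] κ → E :=
  .pi fun j => ∑ i, ((.proj j : (κ → ℝ) →L[ℝ] ℝ) ∘L .proj i).smulRight (a i)

theorem transport_apply (a : ι → E) (H : ι → κ → ℝ) (j : κ) :
    transport a H j = ∑ i, H i j • a i := by
  simp [transport]

theorem sum_apply_transport_single [Fintype κ] [DecidableEq κ] (a : ι → E)
    (ℓ : κ → E →L[ℝ] ℝ) (σ : ι → κ) :
    ∑ j, ℓ j (transport a (fun i => Pi.single (σ i) 1) j) = ∑ i, ℓ (σ i) (a i) := by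
  simp only [transport_apply, map_sum, map_smul, smul_eq_mul, Pi.single_apply, ite_mul, one_mul,
    zero_mul]
  rw [Finset.sum_comm]
  simp only [Finset.sum_ite_eq', Finset.mem_univ, if_true]

theorem exists_mem_stdSimplex_transport_eq [LocallyConvexSpace ℝ E] [T2Space E]
    [Fintype κ] [Nonempty κ] {a : ι → E} {b : κ → E}
    (h : ∀ ℓ : κ → E →L[ℝ] ℝ, ∑ j, ℓ j (b j) ≤
      ∑ i, Finset.univ.sup' Finset.univ_nonempty fun j => ℓ j (a i)) :
    ∃ H : ι → κ → ℝ, (∀ i, H i ∈ stdSimplex ℝ κ) ∧ transport a H = b := by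
  classical
  set K : Set (ι → κ → ℝ) := Set.univ.pi fun _ => stdSimplex ℝ κ
  have hconvex : Convex ℝ (transport a '' K) :=
    (convex_pi fun _ _ => convex_stdSimplex ℝ κ).linear_image (transport a).toLinearMap
  have hcompact : IsCompact (transport a '' K) :=
    (isCompact_univ_pi fun _ => isCompact_stdSimplex ℝ κ).image (transport a).continuous
  suffices hb : b ∈ transport a '' K by
    obtain ⟨H, hH, rfl⟩ := hb
    exact ⟨H, fun i => hH i trivial, rfl⟩
  by_contra hb
  obtain ⟨F, c, hFc, hcF⟩ := geometric_hahn_banach_closed_point hconvex hcompact.isClosed hb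
  set ℓ : κ → E →L[ℝ] ℝ := fun j => F ∘L .single ℝ (fun _ => E) j
  have hF : ∀ y, F y = ∑ j, ℓ j (y j) := fun y =>
    (ContinuousLinearMap.sum_comp_single ℝ (fun _ => E) F y).symm
  have hargmax : ∀ i, ∃ k,
      Finset.univ.sup' Finset.univ_nonempty (fun j => ℓ j (a i)) = ℓ k (a i) := fun i =>
    let ⟨k, _, hk⟩ := Finset.exists_mem_eq_sup' Finset.univ_nonempty fun j => ℓ j (a i)
    ⟨k, hk⟩
  choose σ hσ using hargmax
  refine lt_irrefl (F b) ?_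
  calc F b = ∑ j, ℓ j (b j) := hF b
    _ ≤ ∑ i, ℓ (σ i) (a i) := by simpa only [hσ] using h ℓ
    _ = F (transport a fun i => Pi.single (σ i) 1) := by rw [hF, sum_apply_transport_single]
    _ < c := hFc _ ⟨_, fun _ _ => single_mem_stdSimplex ℝ _, rfl⟩
    _ < F b := hcF

end Transition

section Perspective

variable {𝕜 κ : Type*} [Field 𝕜] [LinearOrder 𝕜] [IsStrictOrderedRing 𝕜] {T : Finset κ}
  (hT : T.Nonempty) (ℓ : κ → 𝕜 × 𝕜 →ₗ[𝕜] 𝕜)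

theorem convexOn_sup'_apply_mk_one :
    ConvexOn 𝕜 Set.univ fun r => T.sup' hT fun k => ℓ k (r, 1) := by
  have hline : ∀ k ∈ T, ConvexOn 𝕜 Set.univ fun r => ℓ k (r, 1) := fun k _ => by
    simpa [Function.comp_def, AffineMap.lineMap_apply] using
      ((ℓ k).convexOn convex_univ).comp_affineMap (AffineMap.lineMap (0, 1) (1, 1))
  convert Finset.sup'_induction hT _ (fun _ h₁ _ h₂ => h₁.sup h₂) hline using 2 with r
  rw [Finset.sup'_apply]

theorem mul_sup'_apply_div_one {v : 𝕜} (hv : 0 < v) (u : 𝕜) :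
    v * T.sup' hT (fun k => ℓ k (u / v, 1)) = T.sup' hT fun k => ℓ k (u, v) := by
  have hscale : ∀ k, v * ℓ k (u / v, 1) = ℓ k (u, v) := fun k => by
    rw [← smul_eq_mul, ← map_smul, Prod.smul_mk, smul_eq_mul, smul_eq_mul,
      mul_div_cancel₀ _ hv.ne', mul_one]
  simp only [Finset.mul₀_sup' hv.le, hscale]

theorem sum_apply_le_sum_sup'_apply_of_hinge_le {ι : Type*} [Fintype ι] [Fintype κ] [Nonempty κ]
    {p g : ι → 𝕜} {p' g' : κ → 𝕜} (hpp : ∑ j, p' j = ∑ i, p i) (hgg : ∑ j, g' j = ∑ i, g i)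
    (hg : ∀ i, 0 < g i) (hg' : ∀ j, 0 < g' j)
    (h : ∀ t, ∑ j, g' j * max (p' j / g' j - t) 0 ≤ ∑ i, g i * max (p i / g i - t) 0) :
    ∑ j, ℓ j (p' j, g' j) ≤
      ∑ i, Finset.univ.sup' Finset.univ_nonempty fun j => ℓ j (p i, g i) := by
  set M : 𝕜 × 𝕜 → 𝕜 := fun z => Finset.univ.sup' Finset.univ_nonempty fun j => ℓ j z
  have hmean : ∑ j, g' j * (p' j / g' j) = ∑ i, g i * (p i / g i) := by
    simpa only [mul_div_cancel₀ _ (hg _).ne', mul_div_cancel₀ _ (hg' _).ne'] using hpp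
  calc ∑ j, ℓ j (p' j, g' j)
      ≤ ∑ j, M (p' j, g' j) :=
        Finset.sum_le_sum fun j _ => Finset.le_sup' (fun k => ℓ k _) (Finset.mem_univ j)
    _ = ∑ j, g' j * M (p' j / g' j, 1) := by simp only [M, mul_sup'_apply_div_one _ ℓ (hg' _)]
    _ ≤ ∑ i, g i * M (p i / g i, 1) :=
        sum_mul_convexOn_le_of_sum_mul_hinge_le hgg hmean h
          (convexOn_sup'_apply_mk_one _ ℓ) (fun _ => trivial) fun _ => trivial
    _ = ∑ i, M (p i, g i) := by simp only [M, mul_sup'_apply_div_one _ ℓ (hg _)]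

end Perspective

theorem plusPart_ineq_imp_gibbsStochastic_general {ι κ : Type*} [Fintype ι] [Fintype κ]
    (p g : ι → ℝ) (p' g' : κ → ℝ) (hpp : ∑ j, p' j = ∑ i, p i) (hgg : ∑ j, g' j = ∑ i, g i)
    (hg : ∀ i, 0 < g i) (hg' : ∀ j, 0 < g' j)
    (h : ∀ t : ℝ, ∑ j, g' j * max (p' j / g' j - t) 0 ≤ ∑ i, g i * max (p i / g i - t) 0) :
    ∃ G : Matrix κ ι ℝ,
      (∀ j i, 0 ≤ G j i) ∧ (∀ i, ∑ j, G j i = 1) ∧ G.mulVec p = p' ∧ G.mulVec g = g' := by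
  rcases isEmpty_or_nonempty κ with hκ | hκ
  · have hι : IsEmpty ι := by
      by_contra! hι
      exact (Finset.sum_pos (fun i _ => hg i) Finset.univ_nonempty).ne (by simpa using hgg)
    exact ⟨0, isEmptyElim, isEmptyElim, Subsingleton.elim _ _, Subsingleton.elim _ _⟩
  obtain ⟨H, hH, hHb⟩ := exists_mem_stdSimplex_transport_eq (a := fun i => (p i, g i))
    (b := fun j => (p' j, g' j)) fun ℓ =>
      sum_apply_le_sum_sup'_apply_of_hinge_le (fun j => (ℓ j).toLinearMap) hpp hgg hg hg' h
  have hcoord : ∀ j, ∑ i, H i j • (p i, g i) = (p' j, g' j) := fun j => by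
    rw [← transport_apply, hHb]
  simp only [Prod.smul_mk, Prod.ext_iff, Prod.fst_sum, Prod.snd_sum, smul_eq_mul] at hcoord
  exact ⟨fun j i => H i j, fun j i => (hH i).1 j, fun i => (hH i).2,
    funext fun j => (hcoord j).1, funext fun j => (hcoord j).2⟩

/-- The `(r - t)₊` inequalities imply the existence of a
Gibbs-stochastic matrix (converse direction, condition (d) ⇒ (a)). -/
theorem plusPart_ineq_imp_gibbsStochastic
    {n n' : ℕ} (p g : Fin n → ℝ) (p' g' : Fin n' → ℝ)
    (hp : ∀ i, 0 ≤ p i) (hps : ∑ i, p i = 1)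
    (hp' : ∀ j, 0 ≤ p' j) (hps' : ∑ j, p' j = 1)
    (hg : ∀ i, 0 < g i) (hgs : ∑ i, g i = 1)
    (hg' : ∀ j, 0 < g' j) (hgs' : ∑ j, g' j = 1)
    (h : ∀ t : ℝ, ∑ j, g' j * max (p' j / g' j - t) 0 ≤ ∑ i, g i * max (p i / g i - t) 0) :
    ∃ G : Matrix (Fin n') (Fin n) ℝ,
      (∀ j i, 0 ≤ G j i) ∧ (∀ i, ∑ j, G j i = 1) ∧
      G.mulVec p = p' ∧ G.mulVec g = g' :=
  plusPart_ineq_imp_gibbsStochastic_general p g p' g' (hps'.trans hps.symm) (hgs'.trans hgs.symm)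
    hg hg' h
end

section
/- Let p ∈ ℝ^n and p' ∈ ℝ^{n'} be probability vectors and let g ∈ ℝ^n and g' ∈ ℝ^{n'} be strictly positive probability vectors. If for every convex function f : ℝ → ℝ one has Σ_j g'_j · f(p'_j/g'_j) ≤ Σ_i g_i · f(p_i/g_i), then there exists a matrix G ∈ ℝ^{n'×n} with nonnegative entries whose columns each sum to 1 and which satisfies G p = p' and G g = g'. -/
/-!
The families `j ↦ ∑ i, G j i • x i` with `G` column stochastic form a compact convex set. A family
`y` outside it is separated from it by functionals `φ j`, one for each row of `G`. The largest value
of `φ` on the set is attained by sending each column `i` to a row `j` maximizing `φ j (x i)`, so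
separation reads `∑ i, ⨆ j, φ j (x i) < ∑ j, φ j (y j)`.

For pairs `x i = (p i, g i)` and `y j = (p' j, g' j)` of reals, homogeneity turns
`⨆ j, φ j (p i, g i)` into `g i * f (p i / g i)` with the convex function `f t = ⨆ j, φ j (t, 1)`,
and separation contradicts the monotonicity of the divergence of this `f`.
-/

section ColumnStochastic

/-- The column-stochastic matrices, of arbitrary rectangular shape (`Matrix.colStochastic` is the
submonoid of square ones): the transition matrices from `ι` to `κ`. -/
def columnStochastic (κ ι : Type*) [Fintype κ] : Set (Matrix κ ι ℝ) :=
  {G | ∀ i, G.col i ∈ stdSimplex ℝ κ}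

variable {ι κ : Type*} [Fintype κ]

theorem convex_columnStochastic : Convex ℝ (columnStochastic κ ι) :=
  fun _ hG _ hH _ _ ha hb hab i => convex_stdSimplex ℝ κ (hG i) (hH i) ha hb hab

theorem isCompact_columnStochastic : IsCompact (columnStochastic κ ι) := by
  have himage : columnStochastic κ ι =
      Matrix.transpose '' Set.univ.pi fun _ : ι => stdSimplex ℝ κ := by
    rw [Set.image_eq_preimage_of_inverse Matrix.transpose_transpose Matrix.transpose_transpose]
    exact Set.ext fun _ => Set.mem_univ_pi.symm
  rw [himage]
  exact (isCompact_univ_pi fun _ => isCompact_stdSimplex ℝ κ).image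
    continuous_id.matrix_transpose

theorem exists_mem_columnStochastic_sum_mul_eq_sum_iSup [Fintype ι] [Nonempty κ]
    (A : Matrix κ ι ℝ) :
    ∃ G ∈ columnStochastic κ ι, ∑ j, ∑ i, G j i * A j i = ∑ i, ⨆ j, A j i := by
  classical
  choose c hc using fun i => exists_eq_ciSup_of_finite (f := fun j => A j i)
  refine ⟨Matrix.of fun j i => Pi.single (M := fun _ => ℝ) (c i) 1 j,
    fun i => single_mem_stdSimplex ℝ (c i), ?_⟩
  rw [Finset.sum_comm]
  simp [Pi.single_apply, hc]

end ColumnStochastic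

section Mixing

variable {ι κ E : Type*} [Fintype ι] [AddCommGroup E] [Module ℝ E]

/-- The map sending a matrix `G` to the family of mixtures `j ↦ ∑ i, G j i • x i` of the vectors
`x i`. Matrices rather than vectors are its argument, so that it carries `columnStochastic` to the
set of families reachable from `x`. -/
def mixing (κ : Type*) (x : ι → E) : Matrix κ ι ℝ →ₗ[ℝ] κ → E :=
  (Fintype.linearCombination ℝ x).compLeft κ

theorem mixing_apply (x : ι → E) (G : Matrix κ ι ℝ) (j : κ) :
    mixing κ x G j = ∑ i, G j i • x i :=
  rfl

theorem map_mixing [Fintype κ] [DecidableEq κ] [TopologicalSpace E] (φ : StrongDual ℝ (κ → E))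
    (x : ι → E) (G : Matrix κ ι ℝ) :
    φ (mixing κ x G) =
      ∑ j, ∑ i, G j i * φ.comp (ContinuousLinearMap.single ℝ (fun _ => E) j) (x i) := by
  simp only [← φ.sum_comp_single, mixing_apply, map_sum, map_smul, smul_eq_mul]

variable [Fintype κ] [TopologicalSpace E] [IsTopologicalAddGroup E] [ContinuousSMul ℝ E]

theorem isCompact_mixing_image_columnStochastic (x : ι → E) :
    IsCompact (mixing κ x '' columnStochastic κ ι) :=
  isCompact_columnStochastic.image (mixing κ x).continuous_of_finiteDimensional

theorem exists_mem_columnStochastic_mixing_eq [LocallyConvexSpace ℝ E] [T2Space E] [Nonempty κ]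
    (x : ι → E) (y : κ → E)
    (h : ∀ φ : κ → StrongDual ℝ E, ∑ j, φ j (y j) ≤ ∑ i, ⨆ j, φ j (x i)) :
    ∃ G ∈ columnStochastic κ ι, mixing κ x G = y := by
  classical
  by_contra hy
  obtain ⟨φ, u, hφ, hφy⟩ := geometric_hahn_banach_closed_point
    (convex_columnStochastic.linear_image (mixing κ x))
    (isCompact_mixing_image_columnStochastic x).isClosed hy
  let ψ (j : κ) : StrongDual ℝ E := φ.comp (ContinuousLinearMap.single ℝ (fun _ => E) j)
  obtain ⟨G, hG, hGmax⟩ := exists_mem_columnStochastic_sum_mul_eq_sum_iSup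
    (Matrix.of fun j i => ψ j (x i))
  have hlt : ∑ i, ⨆ j, ψ j (x i) < ∑ j, ψ j (y j) :=
    calc ∑ i, ⨆ j, ψ j (x i) = φ (mixing κ x G) := by
          rw [map_mixing]
          exact hGmax.symm
      _ < u := hφ _ (Set.mem_image_of_mem _ hG)
      _ < φ y := hφy
      _ = ∑ j, ψ j (y j) := (ContinuousLinearMap.sum_comp_single ..).symm
  exact hlt.not_ge (h ψ)

end Mixing

theorem convexOn_iSup_of_finite {𝕜 E β κ : Type*} [Semiring 𝕜] [PartialOrder 𝕜]
    [AddCommMonoid E] [SMul 𝕜 E] [AddCommMonoid β] [ConditionallyCompleteLattice β]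
    [IsOrderedAddMonoid β] [SMul 𝕜 β] [PosSMulMono 𝕜 β] [Finite κ] [Nonempty κ]
    {s : Set E} {f : κ → E → β} (hf : ∀ j, ConvexOn 𝕜 s (f j)) :
    ConvexOn 𝕜 s fun x => ⨆ j, f j x := by
  refine ⟨(hf (Classical.arbitrary κ)).1, fun x hx y hy a b ha hb hab => ciSup_le fun j => ?_⟩
  have hle (z : E) : f j z ≤ ⨆ k, f k z := le_ciSup (Finite.bddAbove_range fun k => f k z) j
  calc f j (a • x + b • y) ≤ a • f j x + b • f j y := (hf j).2 hx hy ha hb hab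
    _ ≤ a • (⨆ k, f k x) + b • (⨆ k, f k y) := by gcongr <;> exact hle _

section Perspective

variable {κ : Type*} (φ : κ → StrongDual ℝ (ℝ × ℝ))

theorem convexOn_iSup_map_prodMk_one [Finite κ] [Nonempty κ] :
    ConvexOn ℝ Set.univ fun t : ℝ => ⨆ j, φ j (t, 1) :=
  convexOn_iSup_of_finite fun j => ConvexOn.comp_affineMap (f := φ j)
    ((AffineMap.id ℝ ℝ).prod (AffineMap.const ℝ ℝ 1))
    ((φ j).toLinearMap.convexOn convex_univ)

theorem mul_iSup_map_div_one (a : ℝ) {b : ℝ} (hb : 0 < b) :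
    b * ⨆ j, φ j (a / b, 1) = ⨆ j, φ j (a, b) := by
  have hsmul : b • (a / b, (1 : ℝ)) = (a, b) := by
    simp [mul_div_cancel₀ a hb.ne']
  simp only [Real.mul_iSup_of_nonneg hb.le, ← smul_eq_mul, ← map_smul, hsmul]

end Perspective

theorem fDivergence_ineq_imp_gibbsStochastic_general {ι κ : Type*} [Fintype ι] [Fintype κ]
    [Nonempty κ] (p g : ι → ℝ) (p' g' : κ → ℝ) (hg : ∀ i, 0 < g i) (hg' : ∀ j, 0 < g' j)
    (h : ∀ f : ℝ → ℝ, ConvexOn ℝ Set.univ f →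
      ∑ j, g' j * f (p' j / g' j) ≤ ∑ i, g i * f (p i / g i)) :
    ∃ G : Matrix κ ι ℝ,
      (∀ j i, 0 ≤ G j i) ∧ (∀ i, ∑ j, G j i = 1) ∧ G.mulVec p = p' ∧ G.mulVec g = g' := by
  have hdual (φ : κ → StrongDual ℝ (ℝ × ℝ)) :
      ∑ j, φ j (p' j, g' j) ≤ ∑ i, ⨆ j, φ j (p i, g i) :=
    calc ∑ j, φ j (p' j, g' j) ≤ ∑ j, ⨆ k, φ k (p' j, g' j) :=
          Finset.sum_le_sum fun j _ => le_ciSup (Finite.bddAbove_range fun k => φ k _) j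
      _ ≤ ∑ i, ⨆ j, φ j (p i, g i) := by
          simpa only [mul_iSup_map_div_one φ _ (hg _), mul_iSup_map_div_one φ _ (hg' _)]
            using h _ (convexOn_iSup_map_prodMk_one φ)
  obtain ⟨G, hG, hGmix⟩ := exists_mem_columnStochastic_mixing_eq _ _ hdual
  have hpair (j : κ) : (G.mulVec p j, G.mulVec g j) = (p' j, g' j) := by
    rw [← congrFun hGmix j, mixing_apply]
    ext <;> simp [Matrix.mulVec, dotProduct, Prod.fst_sum, Prod.snd_sum]
  exact ⟨G, fun j i => (hG i).1 j, fun i => (hG i).2,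
    funext fun j => congrArg Prod.fst (hpair j), funext fun j => congrArg Prod.snd (hpair j)⟩

/-- If all f-divergences (f convex) are monotone from (p,g) to (p',g'),
then a Gibbs-stochastic matrix exists (condition (b) ⇒ (a)). -/
theorem fDivergence_ineq_imp_gibbsStochastic
    {n n' : ℕ} (p g : Fin n → ℝ) (p' g' : Fin n' → ℝ)
    (hp : ∀ i, 0 ≤ p i) (hps : ∑ i, p i = 1)
    (hp' : ∀ j, 0 ≤ p' j) (hps' : ∑ j, p' j = 1)
    (hg : ∀ i, 0 < g i) (hgs : ∑ i, g i = 1)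
    (hg' : ∀ j, 0 < g' j) (hgs' : ∑ j, g' j = 1)
    (h : ∀ f : ℝ → ℝ, ConvexOn ℝ Set.univ f →
      ∑ j, g' j * f (p' j / g' j) ≤ ∑ i, g i * f (p i / g i)) :
    ∃ G : Matrix (Fin n') (Fin n) ℝ,
      (∀ j i, 0 ≤ G j i) ∧ (∀ i, ∑ j, G j i = 1) ∧
      G.mulVec p = p' ∧ G.mulVec g = g' := by
  have : Nonempty (Fin n') := Finset.univ_nonempty_iff.1 <|
    Finset.nonempty_of_sum_ne_zero (hps'.trans_ne one_ne_zero)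
  exact fDivergence_ineq_imp_gibbsStochastic_general p g p' g' hg hg' h
end

section
/- Let p ∈ ℝ^n and p' ∈ ℝ^{n'} be probability vectors and let g ∈ ℝ^n and g' ∈ ℝ^{n'} be strictly positive probability vectors. For t ∈ [0,1] define the Lorenz curve L_{(p,g)}(t) = max { Σ_i c_i p_i : c ∈ ℝ^n, 0 ≤ c_i ≤ 1 for all i, Σ_i c_i g_i = t }. Then the following are equivalent: (i) there exists a matrix G ∈ ℝ^{n'×n} with nonnegative entries whose columns each sum to 1 and which satisfies G p = p' and G g = g'; (ii) for every t ∈ [0,1], L_{(p',g')}(t) ≤ L_{(p,g)}(t). -/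
/-- The Lorenz curve of the resource `(p,g)`:
`L_{(p,g)}(t) = max { Σ_i c_i p_i : 0 ≤ c_i ≤ 1, Σ_i c_i g_i = t }`. -/
noncomputable def lorenz {n : ℕ} (p g : Fin n → ℝ) (t : ℝ) : ℝ :=
  sSup {s : ℝ | ∃ c : Fin n → ℝ, (∀ i, 0 ≤ c i ∧ c i ≤ 1) ∧
    (∑ i, c i * g i = t) ∧ (∑ i, c i * p i = s)}

/-!
If `G` is Gibbs-stochastic and `c` is admissible for `(p', g')`, then `c ᵥ* G` is admissible for
`(p, g)` and has the same value, so Lorenz curves can only decrease.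

Conversely, the Lorenz curve and the hinge sum `m ↦ ∑ i, (p i - m * g i)⁺` are Legendre duals, so
domination of Lorenz curves is domination of hinge sums. On a finite set of points every convex
function is an affine function plus nonnegative multiples of hinges `x ↦ (x - m)⁺`, whence
`∑ j, g' j * φ (p' j / g' j) ≤ ∑ i, g i * φ (p i / g i)` for every convex `φ`. Applied to maxima of
affine functions, this says that no linear functional separates `(p', g')` from the compact convex
set of images of `(p, g)` under stochastic matrices.
-/

open Finset

section ConvexOrder

variable {φ : ℝ → ℝ}

/-- The convex cone of functions generated by the affine functions and the hinges
`x ↦ (x - m)⁺`, that is, the piecewise affine convex functions on `ℝ`. -/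
def hingeCone : PointedCone ℝ (ℝ → ℝ) :=
  PointedCone.hull ℝ
    ({r | ∃ a b : ℝ, r = fun x => a * x + b} ∪ {r | ∃ m : ℝ, r = fun x => (x - m)⁺})

lemma affine_mem_hingeCone (a b : ℝ) : (fun x => a * x + b) ∈ hingeCone :=
  PointedCone.subset_hull (.inl ⟨a, b, rfl⟩)

lemma hinge_mem_hingeCone (m : ℝ) : (fun x => (x - m)⁺) ∈ hingeCone :=
  PointedCone.subset_hull (.inr ⟨m, rfl⟩)

lemma add_mul_hinge_mem_hingeCone {r : ℝ → ℝ} (hr : r ∈ hingeCone) {δ : ℝ} (hδ : 0 ≤ δ) (m : ℝ) :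
    (fun x => r x + δ * (x - m)⁺) ∈ hingeCone :=
  add_mem hr (hingeCone.smul_mem hδ (hinge_mem_hingeCone m))

lemma exists_supporting_slope (hφ : ConvexOn ℝ Set.univ φ) (x : ℝ) :
    ∃ β, ∀ y, φ x + β * (y - x) ≤ φ y := by
  have hx : x ∈ interior Set.univ := by simp
  refine ⟨derivWithin φ (Set.Ioi x) x, fun y => ?_⟩
  rcases lt_trichotomy x y with hxy | rfl | hyx
  · have hslope := hφ.rightDeriv_le_slope_of_mem_interior hx (Set.mem_univ y) hxy
    rw [slope_def_field, le_div_iff₀ (sub_pos.2 hxy)] at hslope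
    linarith
  · simp
  · have hslope := (hφ.slope_le_leftDeriv_of_mem_interior (Set.mem_univ y) hx hyx).trans
      (hφ.leftDeriv_le_rightDeriv_of_mem_interior hx)
    rw [slope_def_field, div_le_iff₀ (sub_pos.2 hyx)] at hslope
    linarith

/- Past the last node the interpolant is kept equal to the supporting line there. To move on from
the node `m` to the node `M`, the hinge at `m` bends it from the supporting line at `m` to the chord
from `m` to `M`, and the hinge at `M` from that chord to the supporting line at `M`. -/
lemma exists_mem_hingeCone_eqOn_insert {β : ℝ → ℝ} (hβ : ∀ x y, φ x + β x * (y - x) ≤ φ y)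
    (S : Finset ℝ) : ∀ M, (∀ x ∈ S, x < M) → ∃ r ∈ hingeCone,
      (∀ x ∈ insert M S, r x = φ x) ∧ ∀ y, M ≤ y → r y = φ M + β M * (y - M) := by
  induction S using Finset.induction_on_max with
  | empty =>
    exact fun M _ => ⟨_, affine_mem_hingeCone (β M) (φ M - β M * M), by simp, fun y _ => by ring⟩
  | insert m S hm ih =>
    intro M hM
    obtain ⟨r, hr, hrS, hr_line⟩ := ih m hm
    have hmM : 0 < M - m := sub_pos.2 (hM m (mem_insert_self m S))
    set σ := (φ M - φ m) / (M - m) with hσ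
    have hchord : σ * (M - m) = φ M - φ m := div_mul_cancel₀ _ hmM.ne'
    have hmσ : 0 ≤ σ - β m := by
      rw [sub_nonneg, hσ, le_div_iff₀ hmM]
      linarith [hβ m M]
    have hσM : 0 ≤ β M - σ := by
      rw [sub_nonneg, hσ, div_le_iff₀ hmM]
      linarith [hβ M m]
    have h_line : ∀ y, M ≤ y →
        r y + (σ - β m) * (y - m)⁺ + (β M - σ) * (y - M)⁺ = φ M + β M * (y - M) := by
      intro y hy
      rw [hr_line y (by linarith), posPart_of_nonneg (by linarith), posPart_of_nonneg (by linarith)]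
      linear_combination hchord
    refine ⟨_, add_mul_hinge_mem_hingeCone (add_mul_hinge_mem_hingeCone hr hmσ m) hσM M,
      fun x hx => ?_, h_line⟩
    rcases mem_insert.1 hx with rfl | hxS
    · simpa using h_line x le_rfl
    · have hxm : x ≤ m := (mem_insert.1 hxS).elim le_of_eq fun h => (hm x h).le
      simp [posPart_of_nonpos (sub_nonpos.2 hxm), posPart_of_nonpos (sub_nonpos.2 (hM x hxS).le),
        hrS x hxS]

theorem exists_mem_hingeCone_eqOn (hφ : ConvexOn ℝ Set.univ φ) (S : Finset ℝ) :
    ∃ r ∈ hingeCone, Set.EqOn r φ S := by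
  choose β hβ using exists_supporting_slope hφ
  obtain ⟨B, hB⟩ := S.bddAbove
  obtain ⟨r, hr, hrS, -⟩ := exists_mem_hingeCone_eqOn_insert hβ S (B + 1) fun x hx =>
    (hB hx).trans_lt (lt_add_one B)
  exact ⟨r, hr, fun x hx => hrS x (mem_insert_of_mem hx)⟩

variable {ι κ : Type*} [Fintype ι] [Fintype κ]

theorem sum_mul_convexOn_le_of_hinge_le {w x : ι → ℝ} {w' x' : κ → ℝ} (hw : ∑ i, w i = ∑ j, w' j)
    (hwx : ∑ i, w i * x i = ∑ j, w' j * x' j)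
    (hhinge : ∀ m, ∑ j, w' j * (x' j - m)⁺ ≤ ∑ i, w i * (x i - m)⁺)
    (hφ : ConvexOn ℝ Set.univ φ) :
    ∑ j, w' j * φ (x' j) ≤ ∑ i, w i * φ (x i) := by
  have hcone : ∀ r ∈ hingeCone, ∑ j, w' j * r (x' j) ≤ ∑ i, w i * r (x i) := by
    intro r hr
    induction hr using Submodule.span_induction with
    | mem r hr =>
      rcases hr with ⟨a, b, rfl⟩ | ⟨m, rfl⟩
      · simp only [mul_add, mul_left_comm _ a, sum_add_distrib, ← mul_sum, ← sum_mul, hw, hwx,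
          le_refl]
      · exact hhinge m
    | zero => simp
    | add r s _ _ hr hs =>
      simpa only [Pi.add_apply, mul_add, sum_add_distrib] using add_le_add hr hs
    | smul c r _ hr =>
      have hsmul : ∀ x, (c • r) x = c * r x := fun x => rfl
      simpa only [hsmul, mul_left_comm _ (c : ℝ), ← mul_sum] using
        mul_le_mul_of_nonneg_left hr c.2
  classical
  obtain ⟨r, hr, hrφ⟩ := exists_mem_hingeCone_eqOn hφ (univ.image x ∪ univ.image x')
  have hx : ∀ i, r (x i) = φ (x i) := fun i => hrφ (by simp)
  have hx' : ∀ j, r (x' j) = φ (x' j) := fun j => hrφ (by simp)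
  simpa only [hx, hx'] using hcone r hr

end ConvexOrder

section Duality

variable {ι κ : Type*} [Fintype ι] [Fintype κ]

theorem exists_stochastic_of_forall_dual {E : Type*} [AddCommGroup E] [Module ℝ E]
    [TopologicalSpace E] [IsTopologicalAddGroup E] [ContinuousSMul ℝ E] [LocallyConvexSpace ℝ E]
    [T2Space E] {v : ι → E} {v' : κ → E}
    (h : ∀ f : κ → StrongDual ℝ E, ∃ σ : ι → κ, ∑ j, f j (v' j) ≤ ∑ i, f (σ i) (v i)) :
    ∃ G : Matrix κ ι ℝ,
      (∀ j i, 0 ≤ G j i) ∧ (∀ i, ∑ j, G j i = 1) ∧ ∀ j, ∑ i, G j i • v i = v' j := by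
  classical
  let T : (ι → κ → ℝ) →ₗ[ℝ] (κ → E) :=
    { toFun H j := ∑ i, H i j • v i
      map_add' H K := funext fun j => by simp [add_smul, sum_add_distrib]
      map_smul' a H := funext fun j => by simp [mul_smul, smul_sum] }
  have hT : ∀ H j, T H j = ∑ i, H i j • v i := fun _ _ => rfl
  have hTcont : Continuous T := by
    change Continuous fun H : ι → κ → ℝ => fun j => ∑ i, H i j • v i
    fun_prop
  let C : Set (ι → κ → ℝ) := Set.univ.pi fun _ => stdSimplex ℝ κ
  have hconv : Convex ℝ (T '' C) :=
    (convex_pi fun _ _ => convex_stdSimplex ℝ κ).linear_image T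
  have hclosed : IsClosed (T '' C) :=
    ((isCompact_univ_pi fun _ => isCompact_stdSimplex ℝ κ).image hTcont).isClosed
  suffices hmem : v' ∈ T '' C by
    obtain ⟨H, hH, rfl⟩ := hmem
    exact ⟨fun j i => H i j, fun j i => (hH i trivial).1 j, fun i => (hH i trivial).2,
      fun j => (hT H j).symm⟩
  by_contra hmem
  obtain ⟨f, u, hfu, huf⟩ := geometric_hahn_banach_closed_point hconv hclosed hmem
  have hf : ∀ y, f y = ∑ j, f (Pi.single j (y j)) := fun y => by
    rw [← map_sum, univ_sum_single]
  obtain ⟨σ, hσ⟩ := h fun j => f ∘L ContinuousLinearMap.single ℝ (fun _ => E) j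
  have hvertex : f (T fun i => Pi.single (σ i) 1) = ∑ i, f (Pi.single (σ i) (v i)) := by
    rw [← map_sum]
    congr 1
    ext j
    simp [hT, Pi.single_apply, Finset.sum_apply]
  have hlt := hfu _ (Set.mem_image_of_mem T
    (show (fun i => Pi.single (σ i) 1) ∈ C from fun i _ => single_mem_stdSimplex ℝ (σ i)))
  rw [hvertex] at hlt
  rw [hf v'] at huf
  exact (hlt.trans huf).not_ge hσ

lemma convexOn_dual_mk_one (f : StrongDual ℝ (ℝ × ℝ)) :
    ConvexOn ℝ Set.univ fun x : ℝ => f (x, 1) := by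
  refine ⟨convex_univ, fun x _ y _ a b _ _ hab => le_of_eq ?_⟩
  have hcomb : (a • x + b • y, (1 : ℝ)) = a • (x, (1 : ℝ)) + b • (y, (1 : ℝ)) := by
    simp [hab]
  change f (a • x + b • y, 1) = a • f (x, 1) + b • f (y, 1)
  rw [hcomb, map_add, map_smul, map_smul]

lemma mul_dual_div_one (f : StrongDual ℝ (ℝ × ℝ)) (p : ℝ) {g : ℝ} (hg : g ≠ 0) :
    g * f (p / g, 1) = f (p, g) := by
  rw [← smul_eq_mul, ← map_smul, Prod.smul_mk, smul_eq_mul, smul_eq_mul, mul_div_cancel₀ _ hg,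
    mul_one]

variable {p g : ι → ℝ} {p' g' : κ → ℝ}

lemma exists_sum_dual_le_of_hinge_le [Nonempty κ] (hg : ∀ i, 0 < g i) (hg' : ∀ j, 0 < g' j)
    (hp_sum : ∑ i, p i = ∑ j, p' j) (hg_sum : ∑ i, g i = ∑ j, g' j)
    (hhinge : ∀ m, ∑ j, (p' j - m * g' j)⁺ ≤ ∑ i, (p i - m * g i)⁺)
    (f : κ → StrongDual ℝ (ℝ × ℝ)) :
    ∃ σ : ι → κ, ∑ j, f j (p' j, g' j) ≤ ∑ i, f (σ i) (p i, g i) := by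
  have hposPart : ∀ {q e : ℝ}, 0 < e → ∀ m, e * (q / e - m)⁺ = (q - m * e)⁺ := by
    intro q e he m
    rw [posPart_def, posPart_def, mul_max_of_nonneg _ _ he.le, mul_zero, mul_sub,
      mul_div_cancel₀ _ he.ne', mul_comm e]
  let φ : ℝ → ℝ := univ.sup' univ_nonempty fun j x => f j (x, 1)
  have hφ : ConvexOn ℝ Set.univ φ :=
    sup'_induction _ _ (fun _ hr _ hs => hr.sup hs) fun j _ => convexOn_dual_mk_one (f j)
  have hle : ∀ j x, f j (x, 1) ≤ φ x := fun j x =>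
    le_sup' (fun j x => f j (x, 1)) (mem_univ j) x
  have hattained : ∀ x, ∃ j, φ x = f j (x, 1) := fun x => by
    obtain ⟨j, -, hj⟩ := exists_mem_eq_sup' univ_nonempty fun j => f j (x, 1)
    exact ⟨j, (Finset.sup'_apply _ _ _).trans hj⟩
  choose τ hτ using hattained
  refine ⟨fun i => τ (p i / g i), ?_⟩
  calc ∑ j, f j (p' j, g' j)
      = ∑ j, g' j * f j (p' j / g' j, 1) := by simp only [mul_dual_div_one _ _ (hg' _).ne']
    _ ≤ ∑ j, g' j * φ (p' j / g' j) :=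
        sum_le_sum fun j _ => mul_le_mul_of_nonneg_left (hle j _) (hg' j).le
    _ ≤ ∑ i, g i * φ (p i / g i) := by
        refine sum_mul_convexOn_le_of_hinge_le hg_sum ?_ (fun m => ?_) hφ
        · simpa only [mul_div_cancel₀ _ (hg _).ne', mul_div_cancel₀ _ (hg' _).ne'] using hp_sum
        · simpa only [hposPart (hg _), hposPart (hg' _)] using hhinge m
    _ = ∑ i, f (τ (p i / g i)) (p i, g i) := by simp only [hτ, mul_dual_div_one _ _ (hg _).ne']

theorem exists_stochastic_of_hinge_le (hg : ∀ i, 0 < g i) (hg' : ∀ j, 0 < g' j)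
    (hp_sum : ∑ i, p i = ∑ j, p' j) (hg_sum : ∑ i, g i = ∑ j, g' j)
    (hhinge : ∀ m, ∑ j, (p' j - m * g' j)⁺ ≤ ∑ i, (p i - m * g i)⁺) :
    ∃ G : Matrix κ ι ℝ, (∀ j i, 0 ≤ G j i) ∧ (∀ i, ∑ j, G j i = 1) ∧
      G.mulVec p = p' ∧ G.mulVec g = g' := by
  obtain ⟨G, hG, hG_sum, hGpg⟩ : ∃ G : Matrix κ ι ℝ, (∀ j i, 0 ≤ G j i) ∧
      (∀ i, ∑ j, G j i = 1) ∧ ∀ j, ∑ i, G j i • (p i, g i) = (p' j, g' j) := by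
    refine exists_stochastic_of_forall_dual fun f => ?_
    cases isEmpty_or_nonempty κ with
    | inl hκ =>
      have : IsEmpty ι := by
        by_contra hι
        rw [not_isEmpty_iff] at hι
        have := sum_pos (fun i _ => hg i) univ_nonempty
        simp [hg_sum] at this
      exact ⟨isEmptyElim, by simp⟩
    | inr hκ => exact exists_sum_dual_le_of_hinge_le hg hg' hp_sum hg_sum hhinge f
  simp only [Prod.smul_mk, smul_eq_mul, Prod.ext_iff, Prod.fst_sum, Prod.snd_sum] at hGpg
  exact ⟨G, hG, hG_sum, funext fun j => (hGpg j).1, funext fun j => (hGpg j).2⟩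

end Duality

section Lorenz

variable {n n' : ℕ} {p g : Fin n → ℝ} {p' g' : Fin n' → ℝ}

lemma le_lorenz (p g : Fin n → ℝ) {c : Fin n → ℝ} (hc : ∀ i, 0 ≤ c i ∧ c i ≤ 1) :
    ∑ i, c i * p i ≤ lorenz p g (∑ i, c i * g i) := by
  refine le_csSup ⟨∑ i, |p i|, ?_⟩ ⟨c, hc, rfl, rfl⟩
  rintro _ ⟨d, hd, -, rfl⟩
  refine sum_le_sum fun i _ => ?_
  calc d i * p i ≤ d i * |p i| := mul_le_mul_of_nonneg_left (le_abs_self _) (hd i).1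
    _ ≤ |p i| := mul_le_of_le_one_left (abs_nonneg _) (hd i).2

lemma lorenz_le {t : ℝ} (ht : t ∈ Set.Icc 0 (∑ i, g i)) {B : ℝ}
    (hB : ∀ c : Fin n → ℝ, (∀ i, 0 ≤ c i ∧ c i ≤ 1) → ∑ i, c i * g i = t → ∑ i, c i * p i ≤ B) :
    lorenz p g t ≤ B := by
  have hfeasible : ∑ i, t / (∑ i, g i) * g i = t := by
    rw [← mul_sum]
    exact div_mul_cancel_of_imp fun h => le_antisymm (ht.2.trans_eq h) ht.1
  refine csSup_le ⟨_, _, fun _ => ⟨?_, ?_⟩, hfeasible, rfl⟩ ?_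
  · exact div_nonneg ht.1 (ht.1.trans ht.2)
  · exact div_le_one_of_le₀ ht.2 (ht.1.trans ht.2)
  · rintro _ ⟨c, hc, hct, rfl⟩
    exact hB c hc hct

theorem lorenz_mulVec_le {G : Matrix (Fin n') (Fin n) ℝ} (hG : ∀ j i, 0 ≤ G j i)
    (hG_sum : ∀ i, ∑ j, G j i = 1) {t : ℝ} (ht : t ∈ Set.Icc 0 (∑ j, G.mulVec g j)) :
    lorenz (G.mulVec p) (G.mulVec g) t ≤ lorenz p g t := by
  refine lorenz_le ht fun c hc hct => ?_
  have htranspose : ∀ q, ∑ j, c j * G.mulVec q j = ∑ i, Matrix.vecMul c G i * q i := fun q =>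
    Matrix.dotProduct_mulVec c G q
  rw [htranspose] at hct ⊢
  rw [← hct]
  refine le_lorenz p g fun i => ⟨?_, ?_⟩
  · exact sum_nonneg (s := univ) fun j _ => mul_nonneg (hc j).1 (hG j i)
  · calc ∑ j, c j * G j i ≤ ∑ j, G j i :=
          sum_le_sum fun j _ => mul_le_of_le_one_left (hG j i) (hc j).2
      _ = 1 := hG_sum i

theorem lorenz_le_sum_hinge_add {t : ℝ} (ht : t ∈ Set.Icc 0 (∑ i, g i)) (m : ℝ) :
    lorenz p g t ≤ ∑ i, (p i - m * g i)⁺ + m * t := by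
  refine lorenz_le ht fun c hc hct => ?_
  rw [← hct, mul_sum, ← sum_add_distrib]
  refine sum_le_sum fun i _ => ?_
  have hci : c i * (p i - m * g i) ≤ (p i - m * g i)⁺ :=
    (mul_le_mul_of_nonneg_left (le_posPart _) (hc i).1).trans
      (mul_le_of_le_one_left (posPart_nonneg _) (hc i).2)
  linarith

theorem exists_sum_hinge_add_le_lorenz (hg : ∀ i, 0 ≤ g i) (p : Fin n → ℝ) (m : ℝ) :
    ∃ t ∈ Set.Icc 0 (∑ i, g i), ∑ i, (p i - m * g i)⁺ + m * t ≤ lorenz p g t := by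
  let c : Fin n → ℝ := fun i => if 0 ≤ p i - m * g i then 1 else 0
  have hc : ∀ i, 0 ≤ c i ∧ c i ≤ 1 := fun i => by
    dsimp only [c]; split_ifs <;> norm_num
  have hposPart : ∀ i, (p i - m * g i)⁺ = c i * (p i - m * g i) := fun i => by
    dsimp only [c]
    split_ifs with hi
    · rw [posPart_of_nonneg hi, one_mul]
    · rw [posPart_of_nonpos (not_le.1 hi).le, zero_mul]
  refine ⟨∑ i, c i * g i, ⟨sum_nonneg fun i _ => mul_nonneg (hc i).1 (hg i),
    sum_le_sum fun i _ => mul_le_of_le_one_left (hg i) (hc i).2⟩, ?_⟩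
  calc ∑ i, (p i - m * g i)⁺ + m * ∑ i, c i * g i
      = ∑ i, c i * p i := by
        rw [mul_sum, ← sum_add_distrib]
        exact sum_congr rfl fun i _ => by rw [hposPart]; ring
    _ ≤ lorenz p g (∑ i, c i * g i) := le_lorenz p g hc

lemma sum_hinge_le_of_lorenz_le (hg' : ∀ j, 0 ≤ g' j) (hg_sum : ∑ i, g i = ∑ j, g' j)
    (h : ∀ t ∈ Set.Icc 0 (∑ i, g i), lorenz p' g' t ≤ lorenz p g t) (m : ℝ) :
    ∑ j, (p' j - m * g' j)⁺ ≤ ∑ i, (p i - m * g i)⁺ := by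
  obtain ⟨t, ht, hle⟩ := exists_sum_hinge_add_le_lorenz hg' p' m
  rw [← hg_sum] at ht
  linarith [h t ht, lorenz_le_sum_hinge_add (p := p) ht m]

theorem gibbsStochastic_iff_lorenz_le_general (hp_sum : ∑ i, p i = ∑ j, p' j)
    (hg : ∀ i, 0 < g i) (hg' : ∀ j, 0 < g' j) (hg_sum : ∑ i, g i = ∑ j, g' j) :
    (∃ G : Matrix (Fin n') (Fin n) ℝ,
      (∀ j i, 0 ≤ G j i) ∧ (∀ i, ∑ j, G j i = 1) ∧
      G.mulVec p = p' ∧ G.mulVec g = g') ↔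
    (∀ t ∈ Set.Icc 0 (∑ i, g i), lorenz p' g' t ≤ lorenz p g t) := by
  constructor
  · rintro ⟨G, hG, hG_sum, rfl, rfl⟩ t ht
    exact lorenz_mulVec_le hG hG_sum (hg_sum ▸ ht)
  · intro h
    exact exists_stochastic_of_hinge_le hg hg' hp_sum hg_sum
      (sum_hinge_le_of_lorenz_le (fun j => (hg' j).le) hg_sum h)

end Lorenz

/-- Existence of a Gibbs-stochastic matrix is equivalent to
pointwise domination of Lorenz curves. -/
theorem gibbsStochastic_iff_lorenz_le
    {n n' : ℕ} (p g : Fin n → ℝ) (p' g' : Fin n' → ℝ)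
    (hp : ∀ i, 0 ≤ p i) (hps : ∑ i, p i = 1)
    (hp' : ∀ j, 0 ≤ p' j) (hps' : ∑ j, p' j = 1)
    (hg : ∀ i, 0 < g i) (hgs : ∑ i, g i = 1)
    (hg' : ∀ j, 0 < g' j) (hgs' : ∑ j, g' j = 1) :
    (∃ G : Matrix (Fin n') (Fin n) ℝ,
      (∀ j i, 0 ≤ G j i) ∧ (∀ i, ∑ j, G j i = 1) ∧
      G.mulVec p = p' ∧ G.mulVec g = g') ↔
    (∀ t ∈ Set.Icc (0:ℝ) 1, lorenz p' g' t ≤ lorenz p g t) :=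
  hgs ▸ gibbsStochastic_iff_lorenz_le_general (hps.trans hps'.symm) hg hg' (hgs.trans hgs'.symm)
end

section
/- Let p ∈ ℝ^n be a probability vector, let g ∈ ℝ^n be a strictly positive probability vector, and let π be a permutation of {1,…,n} such that the sequence p_{π(1)}/g_{π(1)} ≥ p_{π(2)}/g_{π(2)} ≥ … ≥ p_{π(n)}/g_{π(n)} is non-increasing. Define L_{(p,g)}(t) = max { Σ_i c_i p_i : c ∈ ℝ^n, 0 ≤ c_i ≤ 1 for all i, Σ_i c_i g_i = t } for t ∈ [0,1]. Then (i) L_{(p,g)} is concave on [0,1], and (ii) for every k ∈ {0,1,…,n}, L_{(p,g)}(Σ_{i=1}^k g_{π(i)}) = Σ_{i=1}^k p_{π(i)}. -/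
/-!
The pairs `(∑ i, c i * g i, ∑ i, c i * p i)` with `c` in the unit cube form a zonotope in the plane,
and the Lorenz curve is its upper boundary; the upper boundary of a convex set is concave.
The vertices come from linear programming duality: if a threshold `r` separates the ratios
`p i / g i` over `S` from those off `S`, then the indicator of `S` maximizes
`∑ i, c i * (p i - r * g i)` over the cube, hence also `∑ i, c i * p i` among the `c` with the same
value of `∑ i, c i * g i`.
-/

open Set

section UpperBoundary

open scoped Pointwise

variable {E : Type*} [AddCommMonoid E] [Module ℝ E] {C : Set (E × ℝ)}

theorem smul_fiber_add_smul_fiber_subset (hC : Convex ℝ C) (x y : E) {a b : ℝ}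
    (ha : 0 ≤ a) (hb : 0 ≤ b) (hab : a + b = 1) :
    a • {s | (x, s) ∈ C} + b • {s | (y, s) ∈ C} ⊆ {s | (a • x + b • y, s) ∈ C} := by
  rintro _ ⟨_, ⟨s, hs, rfl⟩, _, ⟨t, ht, rfl⟩, rfl⟩
  exact hC hs ht ha hb hab

theorem concaveOn_sSup_fiber (hC : Convex ℝ C) (hbdd : ∀ x, BddAbove {s | (x, s) ∈ C}) :
    ConcaveOn ℝ (Prod.fst '' C) fun x => sSup {s | (x, s) ∈ C} := by
  refine ⟨hC.linear_image (LinearMap.fst ℝ E ℝ), ?_⟩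
  rintro _ ⟨⟨x, s⟩, hs, rfl⟩ _ ⟨⟨y, t⟩, ht, rfl⟩ a b ha hb hab
  have hx : (a • {s | (x, s) ∈ C}).Nonempty := Set.Nonempty.smul_set ⟨s, hs⟩
  have hy : (b • {t | (y, t) ∈ C}).Nonempty := Set.Nonempty.smul_set ⟨t, ht⟩
  calc a • sSup {s | (x, s) ∈ C} + b • sSup {t | (y, t) ∈ C}
      = sSup (a • {s | (x, s) ∈ C} + b • {t | (y, t) ∈ C}) := by
        rw [csSup_add hx ((hbdd x).smul_of_nonneg ha) hy ((hbdd y).smul_of_nonneg hb),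
          Real.sSup_smul_of_nonneg ha, Real.sSup_smul_of_nonneg hb]
    _ ≤ sSup {s | (a • x + b • y, s) ∈ C} :=
        csSup_le_csSup (hbdd _) (hx.add hy) (smul_fiber_add_smul_fiber_subset hC x y ha hb hab)

end UpperBoundary

section Zonotope

variable {ι : Type*} [Fintype ι] (p g : ι → ℝ)

/-- The Lorenz zonotope of `(p, g)`: the image of the unit cube under
`c ↦ (∑ i, c i * g i, ∑ i, c i * p i)`. Its upper boundary is the Lorenz curve; the `g`-coordinate
comes first, as the argument of that curve. -/
def lorenzZonotope : Set (ℝ × ℝ) :=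
  (Fintype.linearCombination ℝ g).prod (Fintype.linearCombination ℝ p) '' Icc 0 1

variable {p g} in
theorem mem_lorenzZonotope {t s : ℝ} :
    (t, s) ∈ lorenzZonotope p g ↔
      ∃ c : ι → ℝ, (∀ i, 0 ≤ c i ∧ c i ≤ 1) ∧ ∑ i, c i * g i = t ∧ ∑ i, c i * p i = s := by
  simp only [lorenzZonotope, mem_image, mem_Icc, Pi.le_def, ← forall_and, LinearMap.prod_apply,
    Function.prod_apply, Fintype.linearCombination_apply, smul_eq_mul, Prod.mk.injEq, Pi.zero_apply,
    Pi.one_apply]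

theorem convex_lorenzZonotope : Convex ℝ (lorenzZonotope p g) :=
  (convex_Icc 0 1).linear_image _

theorem isCompact_lorenzZonotope : IsCompact (lorenzZonotope p g) :=
  isCompact_Icc.image (LinearMap.continuous_of_finiteDimensional _)

theorem bddAbove_fiber_lorenzZonotope (t : ℝ) : BddAbove {s | (t, s) ∈ lorenzZonotope p g} :=
  ((isCompact_lorenzZonotope p g).image continuous_snd).bddAbove.mono
    fun _ hs => mem_image_of_mem Prod.snd hs

theorem Icc_subset_fst_image_lorenzZonotope :
    Icc 0 (∑ i, g i) ⊆ Prod.fst '' lorenzZonotope p g := by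
  have hconvex : Convex ℝ (Prod.fst '' lorenzZonotope p g) :=
    (convex_lorenzZonotope p g).linear_image (LinearMap.fst ℝ ℝ ℝ)
  have hzero : (0, 0) ∈ lorenzZonotope p g := mem_lorenzZonotope.2 ⟨0, by simp⟩
  have hone : (∑ i, g i, ∑ i, p i) ∈ lorenzZonotope p g := mem_lorenzZonotope.2 ⟨1, by simp⟩
  exact hconvex.ordConnected.out (mem_image_of_mem _ hzero) (mem_image_of_mem _ hone)

end Zonotope

theorem lorenz_eq_sSup_fiber {n : ℕ} (p g : Fin n → ℝ) :
    lorenz p g = fun t => sSup {s | (t, s) ∈ lorenzZonotope p g} := by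
  simp only [mem_lorenzZonotope]
  rfl

theorem concaveOn_lorenz {n : ℕ} (p g : Fin n → ℝ) :
    ConcaveOn ℝ (Icc 0 (∑ i, g i)) (lorenz p g) := by
  rw [lorenz_eq_sSup_fiber]
  exact (concaveOn_sSup_fiber (convex_lorenzZonotope p g)
    (bddAbove_fiber_lorenzZonotope p g)).subset
      (Icc_subset_fst_image_lorenzZonotope p g) (convex_Icc _ _)

theorem sum_mul_le_sum_of_nonneg_of_nonpos {ι : Type*} [Fintype ι] {c f : ι → ℝ}
    (hc : ∀ i, 0 ≤ c i ∧ c i ≤ 1) {S : Finset ι} (hS : ∀ i ∈ S, 0 ≤ f i)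
    (hSc : ∀ i ∉ S, f i ≤ 0) : ∑ i, c i * f i ≤ ∑ i ∈ S, f i := by
  classical
  rw [← S.sum_add_sum_compl]
  have hin : ∑ i ∈ S, c i * f i ≤ ∑ i ∈ S, f i :=
    Finset.sum_le_sum fun i hi => mul_le_of_le_one_left (hS i hi) (hc i).2
  have hout : ∑ i ∈ Sᶜ, c i * f i ≤ 0 :=
    Finset.sum_nonpos fun i hi =>
      mul_nonpos_of_nonneg_of_nonpos (hc i).1 (hSc i (Finset.mem_compl.1 hi))
  linarith

theorem lorenz_sum_eq_of_threshold {n : ℕ} {p g : Fin n → ℝ} {S : Finset (Fin n)} {r : ℝ}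
    (hS : ∀ i ∈ S, r * g i ≤ p i) (hSc : ∀ i ∉ S, p i ≤ r * g i) :
    lorenz p g (∑ i ∈ S, g i) = ∑ i ∈ S, p i := by
  refine IsGreatest.csSup_eq ⟨⟨fun i => if i ∈ S then 1 else 0, fun i => ?_, ?_, ?_⟩, ?_⟩
  · dsimp only
    split_ifs <;> norm_num
  · simp
  · simp
  · rintro _ ⟨c, hc, hcg, rfl⟩
    have hopt : ∑ i, c i * (p i - r * g i) ≤ ∑ i ∈ S, (p i - r * g i) :=
      sum_mul_le_sum_of_nonneg_of_nonpos hc (fun i hi => sub_nonneg.2 (hS i hi))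
        fun i hi => sub_nonpos.2 (hSc i hi)
    simp only [mul_sub, Finset.sum_sub_distrib, mul_left_comm _ r, ← Finset.mul_sum, hcg] at hopt
    linarith

theorem exists_threshold_of_forall_le {ι α : Type*} [Finite ι] [Lattice α] [Nonempty α]
    {f : ι → α} {S : Finset ι} (h : ∀ i ∈ S, ∀ j ∉ S, f j ≤ f i) :
    ∃ r, (∀ i ∈ S, r ≤ f i) ∧ ∀ j ∉ S, f j ≤ r := by
  rcases S.eq_empty_or_nonempty with rfl | hS
  · obtain ⟨r, hr⟩ := (finite_range f).bddAbove
    exact ⟨r, by simp, fun j _ => hr (mem_range_self j)⟩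
  · exact ⟨S.inf' hS f, fun i hi => S.inf'_le f hi,
      fun j hj => S.le_inf' hS f fun i hi => h i hi j hj⟩

theorem lorenz_sum_eq_of_div_le_div {n : ℕ} {p g : Fin n → ℝ} (hg : ∀ i, 0 < g i)
    {S : Finset (Fin n)} (hS : ∀ i ∈ S, ∀ j ∉ S, p j / g j ≤ p i / g i) :
    lorenz p g (∑ i ∈ S, g i) = ∑ i ∈ S, p i := by
  obtain ⟨r, hle, hge⟩ := exists_threshold_of_forall_le hS
  exact lorenz_sum_eq_of_threshold (fun i hi => (le_div_iff₀ (hg i)).1 (hle i hi))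
    fun j hj => (div_le_iff₀ (hg j)).1 (hge j hj)

theorem lorenz_concave_and_interpolates_general {n : ℕ} (p g : Fin n → ℝ) (hg : ∀ i, 0 < g i)
    (π : Equiv.Perm (Fin n))
    (hsort : ∀ i j : Fin n, i ≤ j → p (π j) / g (π j) ≤ p (π i) / g (π i)) :
    ConcaveOn ℝ (Icc 0 (∑ i, g i)) (lorenz p g) ∧
    ∀ k : ℕ,
      lorenz p g (∑ i ∈ Finset.univ.filter (fun i : Fin n => (i : ℕ) < k), g (π i)) =
        ∑ i ∈ Finset.univ.filter (fun i : Fin n => (i : ℕ) < k), p (π i) := by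
  refine ⟨concaveOn_lorenz p g, fun k => ?_⟩
  set S := Finset.univ.filter fun i : Fin n => (i : ℕ) < k
  have hS : ∀ i ∈ S.map π.toEmbedding, ∀ j ∉ S.map π.toEmbedding, p j / g j ≤ p i / g i := by
    refine Finset.forall_mem_map.2 fun i hi => π.surjective.forall.2 fun j hj => ?_
    have hik : (i : ℕ) < k := (Finset.mem_filter.1 hi).2
    have hkj : k ≤ (j : ℕ) := by simpa [S] using hj
    exact hsort i j (hik.trans_le hkj).le
  simpa only [Finset.sum_map, Equiv.coe_toEmbedding] using lorenz_sum_eq_of_div_le_div hg hS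

/-- The Lorenz curve is concave on `[0,1]`, and it is the piecewise
linear curve through the points given by the partial sums of `p` and `g` sorted
by decreasing ratio `p_i/g_i`. -/
theorem lorenz_concave_and_interpolates
    {n : ℕ} (p g : Fin n → ℝ)
    (hp : ∀ i, 0 ≤ p i) (hps : ∑ i, p i = 1)
    (hg : ∀ i, 0 < g i) (hgs : ∑ i, g i = 1)
    (π : Equiv.Perm (Fin n))
    (hsort : ∀ i j : Fin n, i ≤ j → p (π j) / g (π j) ≤ p (π i) / g (π i)) :
    ConcaveOn ℝ (Set.Icc (0:ℝ) 1) (lorenz p g) ∧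
    ∀ k : ℕ, k ≤ n →
      lorenz p g (∑ i ∈ Finset.univ.filter (fun i : Fin n => (i : ℕ) < k), g (π i)) =
        ∑ i ∈ Finset.univ.filter (fun i : Fin n => (i : ℕ) < k), p (π i) := by
  obtain ⟨hconcave, hinterp⟩ := lorenz_concave_and_interpolates_general p g hg π hsort
  exact ⟨hgs ▸ hconcave, fun k _ => hinterp k⟩
end

section
/- Let β > 0 and let 0 < E ≤ E'. For any energy gap a > 0, let g_a = (1/(1+e^{−βa}), e^{−βa}/(1+e^{−βa})) ∈ ℝ² be the two-level Gibbs probability vector. Then there exists a 2×2 matrix G with nonnegative entries whose columns each sum to 1 and which satisfies G·(0,1)ᵀ = (0,1)ᵀ and G·g_{E'} = g_E. (That is, the excited state of a two-level system with larger gap E' can be converted by a Gibbs-stochastic matrix to the excited state of a two-level system with smaller gap E.) -/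
/-- The two-level Gibbs probability vector at inverse temperature `β` for
energy gap `a`: `(1/(1+e^{-βa}), e^{-βa}/(1+e^{-βa}))`. -/
noncomputable def gibbs2 (β a : ℝ) : Fin 2 → ℝ :=
  ![1 / (1 + Real.exp (-β * a)), Real.exp (-β * a) / (1 + Real.exp (-β * a))]

/-!
A map that moves a fraction of the ground-state population up to the excited level, and takes
nothing away from the excited level, is stochastic and fixes the excited state. From a given
probability vector such maps reach every one whose ground-state population is no larger, and the
ground-state population of a Gibbs vector increases with the gap. With more than two levels, one
level `k` collects all that the others lose.
-/

open Matrix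

section Reset

variable {R n : Type*} [DecidableEq n]

/-- The partial reset to level `k`: level `j` keeps the fraction `t j` of its population and sends
the remaining `1 - t j` to `k`. Matrices act on column vectors, so column `j` is
`t j • e_j + (1 - t j) • e_k`, and the value of `t k` is irrelevant. -/
def partialReset [Ring R] (k : n) (t : n → R) : Matrix n n R :=
  diagonal t + vecMulVec (Pi.single k 1) (1 - t)

variable [Fintype n]

theorem partialReset_mulVec [Ring R] (k : n) (t p : n → R) :
    partialReset k t *ᵥ p = t * p + Pi.single k ((1 - t) ⬝ᵥ p) := by
  ext i
  rw [partialReset, add_mulVec, Pi.add_apply, Pi.add_apply, mulVec_diagonal, vecMulVec_mulVec]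
  simp [Pi.single_apply]

theorem partialReset_mulVec_single [Ring R] (k : n) (t : n → R) (c : R) :
    partialReset k t *ᵥ Pi.single k c = Pi.single k c := by
  rw [partialReset_mulVec, dotProduct_single, ← Pi.single_mul_right, ← Pi.single_add]
  simp [sub_mul]

theorem partialReset_mulVec_apply_of_ne [Ring R] {k i : n} (hi : i ≠ k) (t p : n → R) :
    (partialReset k t *ᵥ p) i = t i * p i := by
  simp [partialReset_mulVec, hi]

theorem partialReset_mem_colStochastic [Ring R] [PartialOrder R] [IsOrderedRing R]
    (k : n) {t : n → R} (ht₀ : 0 ≤ t) (ht₁ : t ≤ 1) :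
    partialReset k t ∈ colStochastic R n := by
  have hk : 0 ≤ (Pi.single k 1 : n → R) := Pi.single_nonneg.2 zero_le_one
  refine mem_colStochastic.2 ⟨fun i j ↦ add_nonneg ?_ ?_, ?_⟩
  · rw [diagonal_apply]
    split_ifs
    exacts [ht₀ i, le_rfl]
  · exact mul_nonneg (hk i) (sub_nonneg.2 (ht₁ j))
  · ext j
    simp [partialReset, vecMul_add, vecMul_diagonal, vecMul_vecMulVec]

end Reset

theorem eq_of_sum_eq_of_forall_ne {M n : Type*} [AddCommMonoid M] [IsRightCancelAdd M] [Fintype n]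
    {p q : n → M} (k : n) (hsum : ∑ i, p i = ∑ i, q i) (hne : ∀ i ≠ k, p i = q i) : p = q := by
  classical
  have hrest : ∑ i ∈ {k}ᶜ, p i = ∑ i ∈ {k}ᶜ, q i :=
    Finset.sum_congr rfl fun i hi ↦ hne i (by simpa using hi)
  rw [Fintype.sum_eq_add_sum_compl k, Fintype.sum_eq_add_sum_compl k, hrest] at hsum
  ext i
  obtain rfl | hi := eq_or_ne i k
  exacts [add_right_cancel hsum, hne i hi]

theorem exists_mem_colStochastic_mulVec_eq_of_forall_ne_le {K n : Type*} [Field K] [LinearOrder K]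
    [IsStrictOrderedRing K] [Fintype n] [DecidableEq n] {p q : n → K} (k : n)
    (hq : ∀ i ≠ k, 0 ≤ q i) (hqp : ∀ i ≠ k, q i ≤ p i) (hsum : ∑ i, p i = ∑ i, q i) :
    ∃ G ∈ colStochastic K n, G *ᵥ Pi.single k 1 = Pi.single k 1 ∧ G *ᵥ p = q := by
  let t : n → K := Function.update (q / p) k 1
  have ht {i : n} (hi : i ≠ k) : t i = q i / p i := Function.update_of_ne hi 1 (q / p)
  have ht₀ : 0 ≤ t := le_update_iff.2
    ⟨zero_le_one, fun i hi ↦ div_nonneg (hq i hi) ((hq i hi).trans (hqp i hi))⟩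
  have ht₁ : t ≤ 1 := update_le_iff.2
    ⟨le_rfl, fun i hi ↦ div_le_one_of_le₀ (hqp i hi) ((hq i hi).trans (hqp i hi))⟩
  have hG := partialReset_mem_colStochastic k ht₀ ht₁
  refine ⟨partialReset k t, hG, partialReset_mulVec_single k t 1,
    eq_of_sum_eq_of_forall_ne k ((sum_mulVec_of_mem_colStochastic hG).trans hsum) fun i hi ↦ ?_⟩
  rw [partialReset_mulVec_apply_of_ne hi, ht hi]
  exact div_mul_cancel_of_imp fun hp ↦ le_antisymm (hp ▸ hqp i hi) (hq i hi)

theorem gibbs2_nonneg (β a : ℝ) : 0 ≤ gibbs2 β a :=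
  Fin.forall_fin_two.2
    ⟨one_div_nonneg.2 (by positivity), div_nonneg (by positivity) (by positivity)⟩

theorem sum_gibbs2 (β a : ℝ) : ∑ i, gibbs2 β a i = 1 := by
  have hZ : 1 + Real.exp (-β * a) ≠ 0 := by positivity
  rw [Fin.sum_univ_two]
  exact (add_div _ _ _).symm.trans (div_self hZ)

theorem gibbs2_zero_le_gibbs2_zero {β a b : ℝ} (h : β * a ≤ β * b) :
    gibbs2 β a 0 ≤ gibbs2 β b 0 := by
  have hexp : Real.exp (-β * b) ≤ Real.exp (-β * a) := Real.exp_le_exp.2 (by linarith)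
  exact one_div_le_one_div_of_le (by positivity) (by gcongr)

theorem excited_state_larger_gap_to_smaller_gap_general {β E E' : ℝ} (h : β * E ≤ β * E') :
    ∃ G : Matrix (Fin 2) (Fin 2) ℝ,
      (∀ i j, 0 ≤ G i j) ∧ (∀ j, ∑ i, G i j = 1) ∧
      G.mulVec ![0, 1] = ![0, 1] ∧ G.mulVec (gibbs2 β E') = gibbs2 β E := by
  have hle : ∀ i ≠ 1, gibbs2 β E i ≤ gibbs2 β E' i :=
    Fin.forall_fin_two.2 ⟨fun _ ↦ gibbs2_zero_le_gibbs2_zero h, fun h₁ ↦ (h₁ rfl).elim⟩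
  obtain ⟨G, hG, hfix, hgibbs⟩ := exists_mem_colStochastic_mulVec_eq_of_forall_ne_le 1
    (fun i _ ↦ gibbs2_nonneg β E i) hle ((sum_gibbs2 β E').trans (sum_gibbs2 β E).symm)
  have hexcited : (Pi.single 1 1 : Fin 2 → ℝ) = ![0, 1] := by
    ext i
    fin_cases i <;> rfl
  obtain ⟨hnonneg, hcol⟩ := mem_colStochastic_iff_sum.1 hG
  exact ⟨G, hnonneg, hcol, hexcited ▸ hfix, hgibbs⟩

/-- The excited state of a two-level system with larger gap `E'`
can be converted by a Gibbs-stochastic matrix to the excited state of a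
two-level system with smaller gap `E`. -/
theorem excited_state_larger_gap_to_smaller_gap
    (β E E' : ℝ) (hβ : 0 < β) (hE : 0 < E) (hEE' : E ≤ E') :
    ∃ G : Matrix (Fin 2) (Fin 2) ℝ,
      (∀ i j, 0 ≤ G i j) ∧ (∀ j, ∑ i, G i j = 1) ∧
      G.mulVec ![0, 1] = ![0, 1] ∧ G.mulVec (gibbs2 β E') = gibbs2 β E :=
  excited_state_larger_gap_to_smaller_gap_general (mul_le_mul_of_nonneg_left hEE' hβ.le)
end

section
/- Let β > 0, E > 0, W ∈ ℝ, and set y = e^{−βW}. Let p ∈ ℝ^n and p' ∈ ℝ^{n'} be probability vectors and g ∈ ℝ^n, g' ∈ ℝ^{n'} strictly positive probability vectors. Suppose G₁₁, G₁₂, G₂₁, G₂₂ ∈ ℝ^{n'×n} all have nonnegative entries and satisfy: G₂₁ p = 0; G₂₂ p = p'; G₁₁ g + e^{−βE} G₁₂ g = ((1+e^{−βE})/(1+e^{−β(E+W)})) g'; G₂₁ g + e^{−βE} G₂₂ g = y·((1+e^{−βE})/(1+e^{−β(E+W)}))·e^{−βE} g'; and for every column index i, the i-th column sums of G₁₁ and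 G₂₁ add to 1, and the i-th column sums of G₁₂ and G₂₂ add to 1. Then F := G₂₂ and x := y(1+e^{−βE})/(1+e^{−β(E+W)}) satisfy: F has nonnegative entries, x ≥ 0, F p = p', F g ≤ x g' entrywise, and every column sum of F is at most 1. -/
section OrderedAlgebra

variable {l m n R : Type*}

theorem col_sum_le_of_col_sum_add_col_sum_eq [Fintype l] [Fintype m] [AddCommMonoid R]
    [PartialOrder R] [IsOrderedAddMonoid R] {A : Matrix l n R} {B : Matrix m n R} {i : n} {c : R}
    (hA : ∀ k, 0 ≤ A k i) (h : ∑ k, A k i + ∑ j, B j i = c) : ∑ j, B j i ≤ c :=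
  h ▸ le_add_of_nonneg_left (Finset.sum_nonneg fun k _ => hA k)

theorem mulVec_apply_le_of_mulVec_add_mul_mulVec_eq [Fintype n] [Semiring R] [PartialOrder R]
    [IsOrderedRing R] [PosMulReflectLE R] {A B : Matrix m n R} {g : n → R} {j : m} {b c : R}
    (hA : ∀ i, 0 ≤ A j i) (hg : ∀ i, 0 ≤ g i) (hb : 0 < b)
    (h : A.mulVec g j + b * B.mulVec g j = b * c) : B.mulVec g j ≤ c := by
  have hAg : 0 ≤ A.mulVec g j := dotProduct_nonneg_of_nonneg hA hg
  refine le_of_mul_le_mul_left ?_ hb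
  calc
    b * B.mulVec g j ≤ A.mulVec g j + b * B.mulVec g j := le_add_of_nonneg_left hAg
    _ = b * c := h

end OrderedAlgebra

/-- `b` and `b'` stand for the Boltzmann factors `e^{-βE}` and `e^{-β(E+W)}`, so that `1 + b` and
`1 + b'` are the partition functions `Z_E` and `Z_{E+W}`. -/
theorem block_feasible_to_linprog_feasible_general {l m n K : Type*} [Fintype l] [Fintype m]
    [Fintype n] [Field K] [LinearOrder K] [IsStrictOrderedRing K] {b b' y : K} (hb : 0 < b)
    (hb' : 0 ≤ b') (hy : 0 ≤ y) {p g : n → K} {p' g' : m → K} (hg : ∀ i, 0 ≤ g i)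
    {G₁₂ : Matrix l n K} {G₂₁ G₂₂ : Matrix m n K} (hG₁₂ : ∀ k i, 0 ≤ G₁₂ k i)
    (hG₂₁ : ∀ j i, 0 ≤ G₂₁ j i) (hG₂₂ : ∀ j i, 0 ≤ G₂₂ j i) (hp : G₂₂.mulVec p = p')
    (hgibbs : ∀ j, G₂₁.mulVec g j + b * G₂₂.mulVec g j = y * ((1 + b) / (1 + b')) * b * g' j)
    (hcol : ∀ i, (∑ k, G₁₂ k i) + (∑ j, G₂₂ j i) = 1) :
    (∀ j i, 0 ≤ G₂₂ j i) ∧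
    0 ≤ y * (1 + b) / (1 + b') ∧
    G₂₂.mulVec p = p' ∧
    (∀ j, G₂₂.mulVec g j ≤ y * (1 + b) / (1 + b') * g' j) ∧
    (∀ i, ∑ j, G₂₂ j i ≤ 1) := by
  have hgibbs_factored (j : m) :
      G₂₁.mulVec g j + b * G₂₂.mulVec g j = b * (y * (1 + b) / (1 + b') * g' j) := by
    rw [hgibbs j]; ring
  exact ⟨hG₂₂, by positivity, hp,
    fun j => mulVec_apply_le_of_mulVec_add_mul_mulVec_eq (hG₂₁ j) hg hb (hgibbs_factored j),
    fun i => col_sum_le_of_col_sum_add_col_sum_eq (fun k => hG₁₂ k i) (hcol i)⟩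

/-- A feasible block-form Gibbs-stochastic matrix for the
work-extraction program yields a feasible point `(x, F) = (y·Z_E/Z_{E+W}, G₂₂)`
of the linear program. -/
theorem block_feasible_to_linprog_feasible
    {n n' : ℕ} (β E W : ℝ) (hβ : 0 < β) (hE : 0 < E)
    (y : ℝ) (hy : y = Real.exp (-β * W))
    (p g : Fin n → ℝ) (p' g' : Fin n' → ℝ)
    (hp : ∀ i, 0 ≤ p i) (hps : ∑ i, p i = 1)
    (hp' : ∀ j, 0 ≤ p' j) (hps' : ∑ j, p' j = 1)
    (hg : ∀ i, 0 < g i) (hgs : ∑ i, g i = 1)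
    (hg' : ∀ j, 0 < g' j) (hgs' : ∑ j, g' j = 1)
    (G₁₁ G₁₂ G₂₁ G₂₂ : Matrix (Fin n') (Fin n) ℝ)
    (hG₁₁ : ∀ j i, 0 ≤ G₁₁ j i) (hG₁₂ : ∀ j i, 0 ≤ G₁₂ j i)
    (hG₂₁ : ∀ j i, 0 ≤ G₂₁ j i) (hG₂₂ : ∀ j i, 0 ≤ G₂₂ j i)
    (hp1 : G₂₁.mulVec p = 0)
    (hp2 : G₂₂.mulVec p = p')
    (hg1 : ∀ j, G₁₁.mulVec g j + Real.exp (-β * E) * G₁₂.mulVec g j =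
      ((1 + Real.exp (-β * E)) / (1 + Real.exp (-β * (E + W)))) * g' j)
    (hg2 : ∀ j, G₂₁.mulVec g j + Real.exp (-β * E) * G₂₂.mulVec g j =
      y * ((1 + Real.exp (-β * E)) / (1 + Real.exp (-β * (E + W)))) *
        Real.exp (-β * E) * g' j)
    (hn1 : ∀ i, (∑ j, G₁₁ j i) + (∑ j, G₂₁ j i) = 1)
    (hn2 : ∀ i, (∑ j, G₁₂ j i) + (∑ j, G₂₂ j i) = 1) :
    (∀ j i, 0 ≤ G₂₂ j i) ∧
    0 ≤ y * (1 + Real.exp (-β * E)) / (1 + Real.exp (-β * (E + W))) ∧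
    G₂₂.mulVec p = p' ∧
    (∀ j, G₂₂.mulVec g j ≤
      y * (1 + Real.exp (-β * E)) / (1 + Real.exp (-β * (E + W))) * g' j) ∧
    (∀ i, ∑ j, G₂₂ j i ≤ 1) :=
  block_feasible_to_linprog_feasible_general (Real.exp_pos _) (Real.exp_nonneg _)
    (hy ▸ Real.exp_nonneg _) (fun i => (hg i).le) hG₁₂ hG₂₁ hG₂₂ hp2 hg2 hn2
end

section
/- Let p ∈ ℝ^n be a probability vector and g ∈ ℝ^n a strictly positive probability vector; take the output resource to be trivial, p' = g' = (1) ∈ ℝ¹. Consider all pairs (x, f) with x ∈ ℝ and f ∈ ℝ^{1×n} such that f has nonnegative entries, x ≥ 0, Σ_i f_i p_i = 1, Σ_i f_i g_i ≤ x, and f_i ≤ 1 for all i. Then the minimum of x over all such feasible pairs equals Σ_{i : p_i ≠ 0} g_i. (Consequently the extractable work from the resource (p,g) is W_gain = −(1/β) log Σ_{i : p_i ≠ 0} g_i.) -/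
/-!
If `f` is feasible then `f i * p i ≤ p i` for every `i`, while both sides sum to `1`; hence
`f i = 1` wherever `p i ≠ 0`, and `∑ i, f i * g i` is at least the `g`-weight of the support of `p`.
The indicator function of that support attains this bound.
-/

section

open Finset

variable {ι R : Type*} [Semiring R] [PartialOrder R] {p f g : ι → R}

theorem eq_one_of_sum_mul_eq_sum [IsStrictOrderedRing R] {s : Finset ι}
    (hp : ∀ i ∈ s, 0 ≤ p i) (hf : ∀ i ∈ s, f i ≤ 1)
    (hsum : ∑ i ∈ s, f i * p i = ∑ i ∈ s, p i) {i : ι} (hi : i ∈ s) (hpi : p i ≠ 0) :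
    f i = 1 := by
  have hle : ∀ j ∈ s, f j * p j ≤ p j := fun j hj =>
    mul_le_of_le_one_left (hp j hj) (hf j hj)
  have heq : f i * p i = p i := (sum_eq_sum_iff_of_le hle).1 hsum i hi
  have hpos : 0 < p i := (hp i hi).lt_of_ne' hpi
  by_contra hne
  exact (mul_lt_of_lt_one_left hpos ((hf i hi).lt_of_ne hne)).ne heq

theorem sum_filter_le_sum_mul [IsOrderedRing R] {s : Finset ι} {P : ι → Prop} [DecidablePred P]
    (hf : ∀ i ∈ s, 0 ≤ f i) (hg : ∀ i ∈ s, 0 ≤ g i) (hone : ∀ i ∈ s, P i → f i = 1) :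
    ∑ i ∈ s with P i, g i ≤ ∑ i ∈ s, f i * g i :=
  calc
    ∑ i ∈ s with P i, g i = ∑ i ∈ s with P i, f i * g i :=
      sum_congr rfl fun i hi => by
        rw [hone i (mem_filter.1 hi).1 (mem_filter.1 hi).2, one_mul]
    _ ≤ ∑ i ∈ s, f i * g i :=
      sum_le_sum_of_subset_of_nonneg (filter_subset _ _) fun i hi _ =>
        mul_nonneg (hf i hi) (hg i hi)

theorem work_value_linprog_general [IsStrictOrderedRing R] [DecidableEq R] [Fintype ι]
    (hp : ∀ i, 0 ≤ p i) (hps : ∑ i, p i = 1) (hg : ∀ i, 0 ≤ g i) :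
    IsLeast {x : R | ∃ f : ι → R,
        (∀ i, 0 ≤ f i) ∧ 0 ≤ x ∧ (∑ i, f i * p i = 1) ∧
        (∑ i, f i * g i ≤ x) ∧ (∀ i, f i ≤ 1)}
      (∑ i with p i ≠ 0, g i) := by
  constructor
  · refine ⟨fun i => if p i ≠ 0 then 1 else 0, fun i => ?nonneg,
      sum_nonneg fun i _ => hg i, ?preserves, ?cost, fun i => ?le_one⟩
    case nonneg => dsimp only; split_ifs <;> simp
    case preserves =>
      simpa only [ite_mul, one_mul, zero_mul, ← sum_filter, sum_filter_ne_zero] using hps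
    case cost => simp only [ite_mul, one_mul, zero_mul, ← sum_filter, le_refl]
    case le_one => dsimp only; split_ifs <;> simp
  · rintro x ⟨f, hf_nonneg, -, hfp, hfg, hf_le⟩
    have hf_one : ∀ i, p i ≠ 0 → f i = 1 := fun i =>
      eq_one_of_sum_mul_eq_sum (fun j _ => hp j) (fun j _ => hf_le j) (hfp.trans hps.symm)
        (mem_univ i)
    exact (sum_filter_le_sum_mul (fun i _ => hf_nonneg i) (fun i _ => hg i)
      fun i _ => hf_one i).trans hfg

end

/-- Work value of a resource. For the linear program converting
`(p,g)` to the trivial resource, the minimum of `x` over feasible pairs `(x,f)`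
equals `Σ_{i : p_i ≠ 0} g_i`. -/
theorem work_value_linprog
    {n : ℕ} (p g : Fin n → ℝ)
    (hp : ∀ i, 0 ≤ p i) (hps : ∑ i, p i = 1)
    (hg : ∀ i, 0 < g i) (hgs : ∑ i, g i = 1) :
    IsLeast {x : ℝ | ∃ f : Fin n → ℝ,
        (∀ i, 0 ≤ f i) ∧ 0 ≤ x ∧ (∑ i, f i * p i = 1) ∧
        (∑ i, f i * g i ≤ x) ∧ (∀ i, f i ≤ 1)}
      (∑ i ∈ Finset.univ.filter (fun i => p i ≠ 0), g i) :=
  work_value_linprog_general hp hps fun i => (hg i).le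
end

section
/- Let p' ∈ ℝ^{n'} be a probability vector and g' ∈ ℝ^{n'} a strictly positive probability vector; take the input resource to be trivial, p = g = (1) ∈ ℝ¹. Consider all pairs (x, F) with x ∈ ℝ and F ∈ ℝ^{n'×1} such that F has nonnegative entries, x ≥ 0, F·(1) = p', F·(1) ≤ x g' entrywise, and the column sum of F is at most 1. Then the minimum of x over all such feasible pairs equals max_i p'_i / g'_i. (Consequently the work cost of creating the resource (p',g') is W_cost = (1/β) log max_i p'_i/g'_i.) -/
/-!
An input at equilibrium, `p = g = q`, makes both constraints of the linear program speak about the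
same vector `F q = p'`, so that `F g ≤ x g'` reads `p' ≤ x g'`, a lower bound on `x` in which `F` no
longer occurs. Discarding the input and preparing `p'` is an admissible `F`, so this bound is the
only constraint on `x`.
-/

section

open Matrix

variable {ι κ : Type*}

/-- The values of `x` feasible in the linear program that converts the resource `(p, g)` to
`(p', g')`; the least of them is `exp (β W)` for the work cost `W` of the conversion at inverse
temperature `β`. Column `i` of `F` is the output produced from the `i`-th input level. -/
def conversionFactors [Fintype ι] [Fintype κ] (p g : κ → ℝ) (p' g' : ι → ℝ) : Set ℝ :=
  {x | ∃ F : Matrix ι κ ℝ, (∀ j i, 0 ≤ F j i) ∧ 0 ≤ x ∧ F *ᵥ p = p' ∧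
    (∀ j, (F *ᵥ g) j ≤ x * g' j) ∧ ∀ i, ∑ j, F j i ≤ 1}

theorem iSup_div_le_iff [Finite ι] [Nonempty ι] {a b : ι → ℝ} (hb : ∀ j, 0 < b j) {x : ℝ} :
    ⨆ j, a j / b j ≤ x ↔ ∀ j, a j ≤ x * b j := by
  rw [ciSup_le_iff (Set.finite_range _).bddAbove]
  exact forall_congr' fun j => div_le_iff₀ (hb j)

theorem vecMulVec_one_mulVec_of_sum_eq_one {R : Type*} [Semiring R] [Fintype κ] {q : κ → R}
    (hq : ∑ i, q i = 1) (a : ι → R) : vecMulVec a 1 *ᵥ q = a := by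
  rw [vecMulVec_mulVec, one_dotProduct, hq, MulOpposite.op_one, one_smul]

theorem mem_conversionFactors_self_iff [Fintype ι] [Fintype κ] {q : κ → ℝ} (hq : ∑ i, q i = 1)
    {p' g' : ι → ℝ} (hp' : ∀ j, 0 ≤ p' j) (hps' : ∑ j, p' j ≤ 1) {x : ℝ} :
    x ∈ conversionFactors q q p' g' ↔ 0 ≤ x ∧ ∀ j, p' j ≤ x * g' j := by
  constructor
  · rintro ⟨F, -, hx, rfl, hle, -⟩
    exact ⟨hx, hle⟩
  · rintro ⟨hx, hle⟩
    have hprep : vecMulVec p' 1 *ᵥ q = p' := vecMulVec_one_mulVec_of_sum_eq_one hq p'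
    refine ⟨vecMulVec p' 1, fun j i => ?_, hx, hprep, by rwa [hprep], fun i => ?_⟩
    · simpa only [vecMulVec_apply, Pi.one_apply, mul_one] using hp' j
    · simpa only [vecMulVec_apply, Pi.one_apply, mul_one] using hps'

theorem work_cost_linprog_general [Fintype ι] [Nonempty ι] [Fintype κ] {q : κ → ℝ}
    (hq : ∑ i, q i = 1) {p' g' : ι → ℝ} (hp' : ∀ j, 0 ≤ p' j) (hps' : ∑ j, p' j ≤ 1)
    (hg' : ∀ j, 0 < g' j) :
    conversionFactors q q p' g' = Set.Ici (⨆ j, p' j / g' j) := by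
  have hnonneg : 0 ≤ ⨆ j, p' j / g' j := Real.iSup_nonneg fun j => div_nonneg (hp' j) (hg' j).le
  ext x
  rw [mem_conversionFactors_self_iff hq hp' hps', ← iSup_div_le_iff hg', Set.mem_Ici]
  exact and_iff_right_of_imp hnonneg.trans

end

/-- Work cost of creating a resource. For the linear program
converting the trivial resource to `(p',g')`, the minimum of `x` over feasible
pairs `(x,F)` equals `max_i p'_i / g'_i`. -/
theorem work_cost_linprog
    {n' : ℕ} (p' g' : Fin n' → ℝ)
    (hp' : ∀ j, 0 ≤ p' j) (hps' : ∑ j, p' j = 1)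
    (hg' : ∀ j, 0 < g' j) (hgs' : ∑ j, g' j = 1) :
    IsLeast {x : ℝ | ∃ F : Matrix (Fin n') (Fin 1) ℝ,
        (∀ j i, 0 ≤ F j i) ∧ 0 ≤ x ∧
        (F.mulVec (fun _ => 1) = p') ∧
        (∀ j, F.mulVec (fun _ => 1) j ≤ x * g' j) ∧
        (∑ j, F j 0 ≤ 1)}
      (⨆ j, p' j / g' j) := by
  have : Nonempty (Fin n') :=
    Finset.univ_nonempty_iff.mp (Finset.nonempty_of_sum_ne_zero (hps'.trans_ne one_ne_zero))
  have hleast : IsLeast (conversionFactors (fun _ : Fin 1 => 1) (fun _ => 1) p' g')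
      (⨆ j, p' j / g' j) := by
    rw [work_cost_linprog_general (Fin.sum_univ_one _) hp' hps'.le hg']
    exact isLeast_Ici
  simpa only [conversionFactors, Fin.forall_fin_one] using hleast
end

section
/- Let p ∈ ℝ² be a probability vector with p₁ > 0 and p₂ > 0, let g = g' = (1/2, 1/2) (the Gibbs state of a trivial two-level Hamiltonian), and let p' = (1, 0) (the erased state). Consider all pairs (x, F) with x ∈ ℝ and F ∈ ℝ^{2×2} such that F has nonnegative entries, x ≥ 0, F p = p', F g ≤ x g' entrywise, and every column sum of F is at most 1. Then the minimum of x over all such feasible pairs equals 2, and the unique feasible F is F = [[1,1],[0,0]]. (Consequently the work cost of erasing the bit is (1/β) log 2, which is Landauer's principle.) -/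
/-!
If `F p = e_a` with `∑ p = 1`, then row `a` of `F`, whose entries are at most `1`, has `p`-average
`1`. As `p` has full support, that row is constantly `1`, which exhausts the column sums, so the
other rows vanish: `F` is determined. Then `F g = (∑ g) e_a`, and `F g ≤ x g'` says precisely that
`x ≥ (∑ g) / g' a`.
-/

section Vector

variable {ι R : Type*} [Fintype ι]

lemma eq_single_of_sum_le_apply [AddCommMonoid R] [PartialOrder R] [IsOrderedCancelAddMonoid R]
    [DecidableEq ι] {c : ι → R} {a : ι} (hc : ∀ i, 0 ≤ c i) (hsum : ∑ i, c i ≤ c a) :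
    c = Pi.single a (c a) := by
  refine funext fun j ↦ ?_
  obtain rfl | hja := eq_or_ne j a
  · rw [Pi.single_eq_same]
  · have hle : c j + c a ≤ ∑ i, c i :=
      Finset.add_le_sum (fun i _ ↦ hc i) (Finset.mem_univ j) (Finset.mem_univ a) hja
    rw [Pi.single_eq_of_ne hja]
    exact (nonpos_of_add_le_left (hle.trans hsum)).antisymm (hc j)

lemma eq_of_le_of_dotProduct_eq [Semiring R] [PartialOrder R] [IsStrictOrderedRing R]
    {u v p : ι → R} (hp : ∀ i, 0 < p i) (huv : u ≤ v) (h : u ⬝ᵥ p = v ⬝ᵥ p) : u = v := by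
  have hle : ∀ i ∈ Finset.univ, u i * p i ≤ v i * p i := fun i _ ↦
    mul_le_mul_of_nonneg_right (huv i) (hp i).le
  refine funext fun i ↦ ?_
  have heq : u i * p i = v i * p i := (Finset.sum_eq_sum_iff_of_le hle).1 h i (Finset.mem_univ i)
  exact (huv i).eq_of_not_lt fun hlt ↦ (mul_lt_mul_of_pos_right hlt (hp i)).ne heq

end Vector

section ErasureMatrix

open Matrix

variable {m n R : Type*} [DecidableEq m]

/-- The stochastic matrix, acting on column vectors, of the process that resets every level to
`a`. -/
def erasureMatrix [Zero R] [One R] (a : m) : Matrix m n R :=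
  replicateCol n (Pi.single a 1)

lemma erasureMatrix_apply [Zero R] [One R] (a j : m) (i : n) :
    (erasureMatrix a : Matrix m n R) j i = Pi.single (M := fun _ ↦ R) a 1 j :=
  rfl

lemma erasureMatrix_zero_fin_two [Zero R] [One R] :
    (erasureMatrix 0 : Matrix (Fin 2) (Fin 2) R) = !![1, 1; 0, 0] := by
  ext j i
  fin_cases j <;> fin_cases i <;> rfl

lemma erasureMatrix_nonneg [Zero R] [One R] [Preorder R] [ZeroLEOneClass R] (a j : m) (i : n) :
    0 ≤ (erasureMatrix a : Matrix m n R) j i := by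
  have h : 0 ≤ (Pi.single a 1 : m → R) := Pi.single_nonneg.2 zero_le_one
  exact h j

lemma sum_erasureMatrix_apply [Fintype m] [AddCommMonoidWithOne R] (a : m) (i : n) :
    ∑ j, (erasureMatrix a : Matrix m n R) j i = 1 := by
  simp only [erasureMatrix_apply, Fintype.sum_pi_single']

lemma erasureMatrix_mulVec [Fintype n] [NonAssocSemiring R] (a : m) (q : n → R) :
    erasureMatrix a *ᵥ q = Pi.single a (∑ i, q i) := by
  ext j
  simp [erasureMatrix_apply, mulVec, dotProduct, Pi.single_apply]

lemma eq_erasureMatrix_of_mulVec_apply_eq_sum [Fintype m] [Fintype n]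
    [Semiring R] [PartialOrder R] [IsStrictOrderedRing R] {F : Matrix m n R} {p : n → R} {a : m}
    (hp : ∀ i, 0 < p i) (hF : ∀ j i, 0 ≤ F j i) (hcol : ∀ i, ∑ j, F j i ≤ 1)
    (hFp : (F *ᵥ p) a = ∑ i, p i) : F = erasureMatrix a := by
  have hle : F a ≤ 1 := fun i ↦
    (Finset.single_le_sum (fun j _ ↦ hF j i) (Finset.mem_univ a)).trans (hcol i)
  have hrow : F a = 1 := eq_of_le_of_dotProduct_eq hp hle (hFp.trans (one_dotProduct p).symm)
  ext j i
  have hai : F a i = 1 := congrFun hrow i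
  have hsingle : (F · i) = Pi.single a (F a i) :=
    eq_single_of_sum_le_apply (hF · i) ((hcol i).trans_eq hai.symm)
  rw [erasureMatrix_apply, ← hai]
  exact congrFun hsingle j

end ErasureMatrix

section LinearProgram

open Matrix

variable {m n R : Type*} [Fintype m] [Fintype n]

/-- The constraints of the linear program for converting the resource `(p, g)` to `(p', g')`, whose
objective is to minimize `x`. -/
def IsFeasibleConversion [Semiring R] [LE R] (p g : n → R) (p' g' : m → R) (x : R)
    (F : Matrix m n R) : Prop :=
  (∀ j i, 0 ≤ F j i) ∧ 0 ≤ x ∧ F *ᵥ p = p' ∧ (∀ j, (F *ᵥ g) j ≤ x * g' j) ∧ ∀ i, ∑ j, F j i ≤ 1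

variable [DecidableEq m] [Field R] [LinearOrder R] [IsStrictOrderedRing R]
  {p g : n → R} {g' : m → R} {a : m}

lemma isFeasibleConversion_erasureMatrix_iff (hp_sum : ∑ i, p i = 1) (hg : 0 ≤ ∑ i, g i)
    (hg' : ∀ j, 0 ≤ g' j) (ha : 0 < g' a) {x : R} :
    IsFeasibleConversion p g (Pi.single a 1) g' x (erasureMatrix a) ↔ (∑ i, g i) / g' a ≤ x := by
  constructor
  · rintro ⟨-, -, -, hFg, -⟩
    rw [div_le_iff₀ ha]
    simpa only [erasureMatrix_mulVec, Pi.single_eq_same] using hFg a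
  · intro hx
    have hx0 : 0 ≤ x := (div_nonneg hg ha.le).trans hx
    refine ⟨erasureMatrix_nonneg a, hx0, by rw [erasureMatrix_mulVec, hp_sum], fun j ↦ ?_,
      fun i ↦ (sum_erasureMatrix_apply a i).le⟩
    rw [erasureMatrix_mulVec]
    obtain rfl | hja := eq_or_ne j a
    · rwa [Pi.single_eq_same, ← div_le_iff₀ ha]
    · rw [Pi.single_eq_of_ne hja]
      exact mul_nonneg hx0 (hg' j)

lemma isFeasibleConversion_single_iff (hp : ∀ i, 0 < p i) (hp_sum : ∑ i, p i = 1)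
    (hg : 0 ≤ ∑ i, g i) (hg' : ∀ j, 0 ≤ g' j) (ha : 0 < g' a) {x : R} {F : Matrix m n R} :
    IsFeasibleConversion p g (Pi.single a 1) g' x F ↔
      F = erasureMatrix a ∧ (∑ i, g i) / g' a ≤ x := by
  rw [← isFeasibleConversion_erasureMatrix_iff hp_sum hg hg' ha]
  refine ⟨fun h ↦ ?_, fun ⟨hF, h⟩ ↦ hF ▸ h⟩
  have ⟨hF, _, hFp, _, hcol⟩ := h
  have hFpa : (F *ᵥ p) a = ∑ i, p i := by rw [hFp, Pi.single_eq_same, hp_sum]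
  have hFa := eq_erasureMatrix_of_mulVec_apply_eq_sum hp hF hcol hFpa
  exact ⟨hFa, hFa ▸ h⟩

theorem landauer_linprog_general (hp : ∀ i, 0 < p i) (hp_sum : ∑ i, p i = 1)
    (hg : 0 ≤ ∑ i, g i) (hg' : ∀ j, 0 ≤ g' j) (ha : 0 < g' a) :
    IsLeast {x : R | ∃ F, IsFeasibleConversion p g (Pi.single a 1) g' x F}
      ((∑ i, g i) / g' a) ∧
    ∀ x F, IsFeasibleConversion p g (Pi.single a 1) g' x F → F = erasureMatrix a := by
  simp only [isFeasibleConversion_single_iff hp hp_sum hg hg' ha, exists_eq_left]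
  exact ⟨isLeast_Ici, fun _ _ h ↦ h.1⟩

end LinearProgram

/-- Landauer's principle via the linear program. Erasing a bit
(with trivial Hamiltonian, Gibbs state `(1/2,1/2)`) has optimal value `x = 2`,
and the unique feasible matrix is `F = [[1,1],[0,0]]`, so the work cost is
`(1/β) log 2`. -/
theorem landauer_linprog
    (p : Fin 2 → ℝ) (hp0 : 0 < p 0) (hp1 : 0 < p 1) (hps : ∑ i, p i = 1) :
    IsLeast {x : ℝ | ∃ F : Matrix (Fin 2) (Fin 2) ℝ,
        (∀ j i, 0 ≤ F j i) ∧ 0 ≤ x ∧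
        F.mulVec p = ![1, 0] ∧
        (∀ j, F.mulVec ![(1:ℝ)/2, 1/2] j ≤ x * (![(1:ℝ)/2, 1/2] j)) ∧
        (∀ i, ∑ j, F j i ≤ 1)} 2 ∧
    (∀ x : ℝ, ∀ F : Matrix (Fin 2) (Fin 2) ℝ,
      (∀ j i, 0 ≤ F j i) → 0 ≤ x →
      F.mulVec p = ![1, 0] →
      (∀ j, F.mulVec ![(1:ℝ)/2, 1/2] j ≤ x * (![(1:ℝ)/2, 1/2] j)) →
      (∀ i, ∑ j, F j i ≤ 1) →
      F = !![1, 1; 0, 0]) := by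
  have hg : ∑ i, ![(1 : ℝ) / 2, 1 / 2] i = 1 := by norm_num
  have hg' : ∀ j, 0 < ![(1 : ℝ) / 2, 1 / 2] j := by simp [Fin.forall_fin_two]
  have he : Pi.single 0 1 = ![(1 : ℝ), 0] := by ext j; fin_cases j <;> rfl
  have hx : (1 : ℝ) / ![(1 : ℝ) / 2, 1 / 2] 0 = 2 := by norm_num
  have h := landauer_linprog_general (Fin.forall_fin_two.2 ⟨hp0, hp1⟩) hps
    (hg.symm ▸ zero_le_one) (fun j ↦ (hg' j).le) (hg' 0)
  rw [hg, hx, he, erasureMatrix_zero_fin_two] at h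
  exact ⟨h.1, fun x F hF hx hFp hFg hcol ↦ h.2 x F ⟨hF, hx, hFp, hFg, hcol⟩⟩
end
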